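/- Let G be a countably infinite discrete amenable group, X an infinite compact metrizable space, and α: G ↷ X a minimal free continuous action such that E_G(X) is compact and has covering dimension at most m in the weak* topology. If α has dynamical comparison, then α is m-almost finite. -/

import Mathlib

open MeasureTheory Set Pointwise

variable (G X : Type*)

section Defs

variable [Group G] [MetricSpace X] [MeasurableSpace X] [MulAction G X]

/-- A Borel probability measure is `G`-invariant. -/
def InvariantMeasure (μ : ProbabilityMeasure X) : Prop :=
  ∀ g : G, MeasureTheory.Measure.map (fun x => g • x) (μ : Measure X) = (μ : Measure X)

/-- `M_G(X)`: the set of `G`-invariant Borel probability measures on `X`. -/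
def MG : Set (ProbabilityMeasure X) := {μ | InvariantMeasure G X μ}

/-- `E_G(X)`: the set of ergodic `G`-invariant Borel probability measures on `X`,
i.e. invariant measures giving every `G`-invariant Borel set measure `0` or `1`. -/
def EG : Set (ProbabilityMeasure X) :=
  {μ | InvariantMeasure G X μ ∧
    ∀ A : Set X, MeasurableSet A → (∀ g : G, g • A = A) → μ A = 0 ∨ μ A = 1}

/-- The action of `G` on `X` is free. -/
def FreeAction : Prop := ∀ (g : G) (x : X), g • x = x → g = 1

/-- The action of `G` on `X` is minimal: there is no proper nonempty closed invariant subset. -/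
def MinimalAction : Prop :=
  ∀ C : Set X, IsClosed C → (∀ g : G, g • C ⊆ C) → C = ∅ ∨ C = Set.univ

/-- The small boundary property. -/
def SmallBoundaryProperty : Prop :=
  ∀ (x : X) (U : Set X), IsOpen U → x ∈ U →
    ∃ V : Set X, IsOpen V ∧ x ∈ V ∧ V ⊆ U ∧ ∀ μ ∈ MG G X, μ (frontier V) = 0

/-- `S` is a `(K,δ)`-invariant finite subset of `G`. -/
def FolnerInv (K : Finset G) (δ : ℝ) (S : Finset G) : Prop :=
  (1 - δ) * (S.card : ℝ) ≤ ({s | s ∈ S ∧ ∀ k ∈ K, k * s ∈ S} : Set G).ncard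

/-- `G` is amenable: it admits `(K,δ)`-invariant nonempty finite subsets for all `K, δ`. -/
def AmenableGroup : Prop :=
  ∀ (K : Finset G) (δ : ℝ), 0 < δ → ∃ S : Finset G, S.Nonempty ∧ FolnerInv G K δ S

/-- `(S, V)` is a tower: the translates `s • V`, `s ∈ S`, are pairwise disjoint. -/
def IsTower (S : Finset G) (V : Set X) : Prop :=
  (S : Set G).Pairwise fun s t => Disjoint (s • V) (t • V)

/-- `F ≺_m O`: subordination with `m`-colored multiplicity. -/
def SubordinateM (m : ℕ) (F O : Set X) : Prop :=
  ∃ (n : ℕ) (U : Fin n → Set X) (s : Fin n → G) (c : Fin n → Fin (m + 1)),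
    (∀ k, IsOpen (U k)) ∧ F ⊆ ⋃ k, U k ∧ (∀ k, s k • U k ⊆ O) ∧
    ∀ k l, k ≠ l → c k = c l → Disjoint (s k • U k) (s l • U l)

/-- The action has dynamical `m`-comparison. -/
def HasMComparison (m : ℕ) : Prop :=
  ∀ F O : Set X, IsClosed F → IsOpen O →
    (∀ μ ∈ MG G X, μ F < μ O) → SubordinateM G X m F O

/-- The action is `m`-almost finite. -/
def MAlmostFinite (m : ℕ) : Prop :=
  ∀ (n : ℕ), 1 ≤ n → ∀ (K : Finset G) (δ : ℝ), 0 < δ →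
    ∃ (I : ℕ) (S : Fin I → Finset G) (V : Fin I → Set X) (c : Fin I → Fin (m + 1))
      (S' : Fin I → Finset G),
      (∀ i, IsOpen (V i)) ∧
      (∀ i, IsTower G X (S i) (closure (V i))) ∧
      (∀ i, FolnerInv G K δ (S i)) ∧
      (∀ i, ∀ s ∈ S i, Metric.diam (s • closure (V i)) < δ) ∧
      (∀ i j, i ≠ j → c i = c j →
        Disjoint ((S i : Set G) • closure (V i)) ((S j : Set G) • closure (V j))) ∧
      (∀ i, S' i ⊆ S i) ∧ (∀ i, ((S' i).card : ℝ) ≤ (S i).card / n) ∧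
      SubordinateM G X 0 (Set.univ \ ⋃ i, (S i : Set G) • V i) (⋃ i, (S' i : Set G) • V i)

end Defs

/-- Covering dimension of a topological space is at most `m`: every finite open cover has a
finite open refinement covering the space in which no point lies in more than `m+1` members. -/
def CovDimLE (Y : Type*) [TopologicalSpace Y] (m : ℕ) : Prop :=
  ∀ (n : ℕ) (U : Fin n → Set Y), (∀ i, IsOpen (U i)) → (⋃ i, U i) = Set.univ →
    ∃ (k : ℕ) (W : Fin k → Set Y), (∀ j, IsOpen (W j)) ∧ (⋃ j, W j) = Set.univ ∧
      (∀ j, ∃ i, W j ⊆ U i) ∧ ∀ y : Y, ({j | y ∈ W j} : Set (Fin k)).ncard ≤ m + 1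

/-!
By the Ornstein–Weiss quasi-tiling argument, each ergodic measure `μ` admits a castle with open
bases and Følner shapes covering all of `X` up to small `μ`-measure; the same castle then works on
a weak* neighbourhood of `μ`. As `E_G(X)` is compact of dimension at most `m`, finitely many such
neighbourhoods suffice, and they can be shrunk to a cover by compact sets coloured with `m + 1`
colours so that sets of the same colour are disjoint.

Castles attached to different compact sets of one colour may overlap. By the mean ergodic theorem
the Følner averages of a continuous function converge in measure to its integral, uniformly over
the compact set `E_G(X)`. Averages of finitely many functions whose integrals tell the compact sets
apart therefore yield open subsets of `X` with disjoint closures, each of almost full measure for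
every ergodic measure in its compact set. Cutting the castles down to these sets makes those of one
colour disjoint.

What is left uncovered is small for all ergodic measures, hence for all invariant ones, since an
upper semicontinuous affine function on the compact convex set `M_G(X)` is maximal at an extreme
point. Comparison then moves the remainder into a fixed proportion of the towers.
-/

open Filter Topology

universe u v

section InvariantMeasures

variable {G X}

theorem mem_MG_iff [Group G] [MeasurableSpace X] [MulAction G X] [MeasurableConstSMul G X]
    {μ : ProbabilityMeasure X} : μ ∈ MG G X ↔ SMulInvariantMeasure G X (μ : Measure X) :=
  (smulInvariantMeasure_tfae G (μ : Measure X)).out 5 0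

variable [Group G] [MulAction G X] [MeasurableSpace X] (μ : Measure X) [SMulInvariantMeasure G X μ]

theorem measureReal_smul (g : G) (A : Set X) : μ.real (g • A) = μ.real A :=
  congrArg ENNReal.toReal (measure_smul μ g A)

end InvariantMeasures

/-- A finite collection of pairs `(S, V)` of a shape `S` and a base `V`. No disjointness is built
in, so that shapes and bases can be modified freely; see `TowerFamily.IsCastle`. The index type
lives in the universe of `G` because `TowerFamily.greedyFilling` is indexed by subsets of `G`. -/
structure TowerFamily (G : Type u) (X : Type v) where
  ι : Type u
  [fintype : Fintype ι]
  shape : ι → Finset G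
  base : ι → Set X

attribute [instance] TowerFamily.fintype

namespace TowerFamily

variable {G : Type u} {X : Type v}

/-- The same shapes over new bases. -/
def withBase (T : TowerFamily G X) (B : T.ι → Set X) : TowerFamily G X where
  ι := T.ι
  shape := T.shape
  base := B

/-- The same bases under new shapes. -/
def withShape (T : TowerFamily G X) (S : T.ι → Finset G) : TowerFamily G X where
  ι := T.ι
  shape := S
  base := T.base

/-- The family without towers. -/
def empty : TowerFamily G X where
  ι := PEmpty
  shape := nofun
  base := nofun

/-- The disjoint union of two tower families. -/
def sum (T T' : TowerFamily G X) : TowerFamily G X where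
  ι := T.ι ⊕ T'.ι
  shape := Sum.elim T.shape T'.shape
  base := Sum.elim T.base T'.base

/-- The disjoint union of finitely many tower families. -/
def sigma {κ : Type} [Fintype κ] (T : κ → TowerFamily G X) : TowerFamily G X where
  ι := Σ k, (T k).ι
  shape := fun a => (T a.1).shape a.2
  base := fun a => (T a.1).base a.2

section Support

variable [Group G] [MulAction G X] {T T' : TowerFamily G X}

/-- The part of the space covered by the towers. -/
def support (T : TowerFamily G X) : Set X := ⋃ i, (T.shape i : Set G) • T.base i

theorem mem_support {z : X} :
    z ∈ T.support ↔ ∃ i, ∃ s ∈ T.shape i, ∃ x ∈ T.base i, s • x = z := by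
  simp only [support, mem_iUnion, Set.mem_smul, Finset.mem_coe]

theorem smul_mem_support {i : T.ι} {s : G} {x : X} (hs : s ∈ T.shape i) (hx : x ∈ T.base i) :
    s • x ∈ T.support :=
  mem_support.2 ⟨i, s, hs, x, hx, rfl⟩

theorem support_eq_iUnion_smul : T.support = ⋃ i, ⋃ s ∈ T.shape i, s • T.base i := by
  simp only [support, ← iUnion_smul_set, Finset.mem_coe]

@[simp]
theorem support_empty : (empty : TowerFamily G X).support = ∅ :=
  iSup_of_empty (ι := PEmpty) _

@[simp]
theorem support_sum : (T.sum T').support = T.support ∪ T'.support :=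
  iSup_sum

theorem support_sigma {κ : Type} [Fintype κ] (T : κ → TowerFamily G X) :
    (sigma T).support = ⋃ k, (T k).support :=
  iSup_sigma

/-- A castle: all translates `s • V`, over all towers `(S, V)` and all `s ∈ S`, are pairwise
disjoint. -/
def IsCastle (T : TowerFamily G X) : Prop :=
  ∀ i j, ∀ s ∈ T.shape i, ∀ t ∈ T.shape j, ∀ x ∈ T.base i, ∀ y ∈ T.base j,
    s • x = t • y → i = j ∧ s = t

theorem isCastle_empty : (empty : TowerFamily G X).IsCastle := nofun

theorem IsCastle.sum (hT : T.IsCastle) (hT' : T'.IsCastle)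
    (hd : Disjoint T.support T'.support) : (T.sum T').IsCastle := by
  rintro (i | i) (j | j) s hs t ht x hx y hy hxy
  · exact (hT i j s hs t ht x hx y hy hxy).imp_left (congrArg Sum.inl)
  · exact (hd.ne_of_mem (smul_mem_support hs hx) (smul_mem_support ht hy) hxy).elim
  · exact (hd.ne_of_mem (smul_mem_support ht hy) (smul_mem_support hs hx) hxy.symm).elim
  · exact (hT' i j s hs t ht x hx y hy hxy).imp_left (congrArg Sum.inr)

theorem IsCastle.sigma {κ : Type} [Fintype κ] {T : κ → TowerFamily G X}
    (hT : ∀ k, (T k).IsCastle) (hd : Pairwise fun k l => Disjoint (T k).support (T l).support) :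
    (sigma T).IsCastle := by
  rintro ⟨k, i⟩ ⟨l, j⟩ s hs t ht x hx y hy hxy
  obtain rfl : k = l := by
    by_contra hkl
    exact (hd hkl).ne_of_mem (smul_mem_support hs hx) (smul_mem_support ht hy) hxy
  exact (hT k i j s hs t ht x hx y hy hxy).imp_left (congrArg (Sigma.mk k))

theorem IsCastle.withBase (hT : T.IsCastle) {B : T.ι → Set X} (hB : ∀ i, B i ⊆ T.base i) :
    (T.withBase B).IsCastle :=
  fun i j s hs t ht x hx y hy => hT i j s hs t ht x (hB i hx) y (hB j hy)

theorem support_withBase_subset {B : T.ι → Set X} (hB : ∀ i, B i ⊆ T.base i) :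
    (T.withBase B).support ⊆ T.support :=
  iUnion_mono fun i => smul_subset_smul_left (hB i)

theorem IsCastle.isTower (hT : T.IsCastle) (i : T.ι) : IsTower G X (T.shape i) (T.base i) := by
  refine fun s hs t ht hst => disjoint_left.2 ?_
  rintro _ ⟨x, hx, rfl⟩ ⟨y, hy, hxy⟩
  exact hst (hT i i s hs t ht x hx y hy hxy.symm).2

theorem IsCastle.disjoint_smul_base (hT : T.IsCastle) {i j : T.ι} (hij : i ≠ j) :
    Disjoint ((T.shape i : Set G) • T.base i) ((T.shape j : Set G) • T.base j) := by
  refine disjoint_left.2 ?_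
  rintro _ ⟨s, hs, x, hx, rfl⟩ ⟨t, ht, y, hy, hxy⟩
  exact hij (hT i j s hs t ht x hx y hy hxy.symm).1

theorem measurableSet_support [MeasurableSpace X] [MeasurableConstSMul G X]
    (hT : ∀ i, MeasurableSet (T.base i)) : MeasurableSet T.support := by
  rw [support_eq_iUnion_smul]
  exact .iUnion fun i => Finset.measurableSet_biUnion _ fun s _ => (hT i).const_smul s

theorem isOpen_support [TopologicalSpace X] [ContinuousConstSMul G X]
    (hT : ∀ i, IsOpen (T.base i)) : IsOpen T.support := by
  rw [support_eq_iUnion_smul]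
  exact isOpen_iUnion fun i => isOpen_biUnion fun s _ => (hT i).smul s

theorem IsCastle.measureReal_support [MeasurableSpace X] [MeasurableConstSMul G X]
    (hT : T.IsCastle) (hm : ∀ i, MeasurableSet (T.base i)) (μ : Measure X) [IsFiniteMeasure μ]
    [SMulInvariantMeasure G X μ] :
    μ.real T.support = ∑ i, (T.shape i).card * μ.real (T.base i) := by
  have hsmul (i : T.ι) : (T.shape i : Set G) • T.base i = ⋃ s ∈ T.shape i, s • T.base i :=
    (iUnion_smul_set _ _).symm
  rw [support, measureReal_iUnion_fintype fun i j hij => hT.disjoint_smul_base hij]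
  · refine Finset.sum_congr rfl fun i _ => ?_
    rw [hsmul, measureReal_biUnion_finset (hT.isTower i) fun s _ => (hm i).const_smul s]
    simp only [measureReal_smul, Finset.sum_const, nsmul_eq_mul]
  · intro i
    rw [hsmul]
    exact Finset.measurableSet_biUnion _ fun s _ => (hm i).const_smul s

end Support

end TowerFamily

section Folner

variable {G} [Group G] {K L F S : Finset G} {δ ε : ℝ}

theorem folnerInv_iff_card_filter_le [DecidableEq G] :
    FolnerInv G K δ F ↔ ((F.filter fun s => ∃ k ∈ K, k * s ∉ F).card : ℝ) ≤ δ * F.card := by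
  have hset : {s | s ∈ F ∧ ∀ k ∈ K, k * s ∈ F} = ↑(F.filter fun s => ¬∃ k ∈ K, k * s ∉ F) := by
    ext; simp
  have hcard : ((F.filter fun s => ∃ k ∈ K, k * s ∉ F).card : ℝ) +
      (F.filter fun s => ¬∃ k ∈ K, k * s ∉ F).card = F.card := by
    exact_mod_cast Finset.card_filter_add_card_filter_not _
  rw [FolnerInv, hset, ncard_coe_finset]
  constructor <;> intro h <;> linarith

theorem FolnerInv.mono (hF : FolnerInv G L δ F) (hK : K ⊆ L) (hδ : δ ≤ ε) :
    FolnerInv G K ε F := by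
  classical
  rw [folnerInv_iff_card_filter_le] at *
  calc ((F.filter fun s => ∃ k ∈ K, k * s ∉ F).card : ℝ)
      ≤ (F.filter fun s => ∃ k ∈ L, k * s ∉ F).card := by
        gcongr
    _ ≤ δ * F.card := hF
    _ ≤ ε * F.card := by gcongr

theorem FolnerInv.card_filter_mul_notMem_le [DecidableEq G] (hF : FolnerInv G K δ F) {k : G}
    (hk : k ∈ K) : ((F.filter fun s => k * s ∉ F).card : ℝ) ≤ δ * F.card := by
  refine le_trans ?_ (folnerInv_iff_card_filter_le.1 hF)
  gcongr with s _
  exact fun hs => ⟨k, hk, hs⟩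

theorem FolnerInv.of_subset (hF : FolnerInv G K ε F) (hSF : S ⊆ F)
    (hS : (1 - ε) * F.card ≤ S.card) (hδ : 0 ≤ δ) (hεδ : ε * (1 + K.card) ≤ δ * (1 - ε)) :
    FolnerInv G K δ S := by
  classical
  rw [folnerInv_iff_card_filter_le] at *
  have hsub : (S.filter fun s => ∃ k ∈ K, k * s ∉ S) ⊆
      (F.filter fun s => ∃ k ∈ K, k * s ∉ F) ∪
        K.biUnion fun k => (F \ S).image fun s => k⁻¹ * s := by
    intro s hs
    obtain ⟨hsS, k, hk, hks⟩ := Finset.mem_filter.1 hs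
    simp only [Finset.mem_union, Finset.mem_filter, Finset.mem_biUnion, Finset.mem_image,
      Finset.mem_sdiff]
    by_cases hkF : k * s ∈ F
    · exact .inr ⟨k, hk, k * s, ⟨hkF, hks⟩, inv_mul_cancel_left k s⟩
    · exact .inl ⟨hSF hsS, k, hk, hkF⟩
  have hdiff : ((F \ S).card : ℝ) ≤ ε * F.card := by
    rw [Finset.cast_card_sdiff hSF]
    linarith
  have hcard : ((S.filter fun s => ∃ k ∈ K, k * s ∉ S).card : ℝ) ≤
      (F.filter fun s => ∃ k ∈ K, k * s ∉ F).card + K.card * (F \ S).card := by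
    exact_mod_cast (Finset.card_le_card hsub).trans <| (Finset.card_union_le _ _).trans <|
      Nat.add_le_add_left
        (Finset.card_biUnion_le_card_mul _ _ _ fun k _ => Finset.card_image_le) _
  calc ((S.filter fun s => ∃ k ∈ K, k * s ∉ S).card : ℝ)
      ≤ ε * F.card + K.card * (ε * F.card) := hcard.trans (by gcongr)
    _ = ε * (1 + K.card) * F.card := by ring
    _ ≤ δ * ((1 - ε) * F.card) := by rw [← mul_assoc]; gcongr
    _ ≤ δ * S.card := by gcongr

variable (G) in
/-- The filter of "sufficiently invariant" nonempty finite sets: a property holds eventually along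
it if it holds for all nonempty `(K, δ)`-invariant sets, for some `K` and `δ > 0`. -/
def folnerFilter : Filter (Finset G) :=
  ⨅ p : Finset G × Ioi (0 : ℝ), 𝓟 {F | F.Nonempty ∧ FolnerInv G p.1 p.2 F}

theorem folnerFilter_neBot (hG : AmenableGroup G) : (folnerFilter G).NeBot := by
  classical
  refine iInf_neBot_of_directed' ?_ fun p => principal_neBot_iff.2 (hG p.1 p.2 p.2.2)
  rintro ⟨K, δ⟩ ⟨L, ε⟩
  exact ⟨(K ∪ L, min δ ε),
    principal_mono.2 fun F hF => ⟨hF.1, hF.2.mono Finset.subset_union_left (min_le_left _ _)⟩,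
    principal_mono.2 fun F hF => ⟨hF.1, hF.2.mono Finset.subset_union_right (min_le_right _ _)⟩⟩

theorem eventually_nonempty_and_folnerInv (K : Finset G) (hδ : 0 < δ) :
    ∀ᶠ F in folnerFilter G, F.Nonempty ∧ FolnerInv G K δ F :=
  mem_iInf_of_mem (K, ⟨δ, hδ⟩) (mem_principal_self _)

theorem eventually_folnerInv (K : Finset G) (hδ : 0 < δ) :
    ∀ᶠ F in folnerFilter G, FolnerInv G K δ F :=
  (eventually_nonempty_and_folnerInv K hδ).mono fun _ h => h.2

variable (G) in
theorem eventually_nonempty : ∀ᶠ F in folnerFilter G, F.Nonempty :=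
  (eventually_nonempty_and_folnerInv ∅ one_pos).mono fun _ h => h.1

theorem eventually_le_card [Infinite G] (N : ℕ) : ∀ᶠ F in folnerFilter G, N ≤ F.card := by
  classical
  obtain ⟨K, rfl⟩ := Infinite.exists_subset_card_eq G N
  filter_upwards [eventually_nonempty_and_folnerInv K one_half_pos] with F ⟨hne, hF⟩
  rw [folnerInv_iff_card_filter_le] at hF
  obtain ⟨s, hs⟩ : ∃ s ∈ F, ¬∃ k ∈ K, k * s ∉ F := by
    by_contra! h
    rw [Finset.filter_true_of_mem h] at hF
    linarith [Nat.cast_pos (α := ℝ).2 hne.card_pos]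
  push Not at hs
  rw [← Finset.card_image_of_injective K (mul_left_injective s)]
  exact Finset.card_le_card (Finset.image_subset_iff.2 hs.2)

theorem exists_eventually_forall_subset_folnerInv [Infinite G] (K : Finset G) (hδ : 0 < δ)
    (N : ℕ) : ∃ ε : ℝ, 0 < ε ∧ ε < 1 ∧ ∀ᶠ F in folnerFilter G, ∀ S ⊆ F,
      (1 - ε) * F.card ≤ S.card → FolnerInv G K δ S ∧ N ≤ S.card := by
  obtain ⟨ε, ⟨hεK, hε⟩, hε0⟩ : ∃ ε : ℝ, (ε * (1 + K.card) ≤ δ * (1 - ε) ∧ ε ≤ 1 / 2) ∧ 0 < ε := by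
    have hlim : Tendsto (fun ε : ℝ => δ * (1 - ε) - ε * (1 + K.card)) (𝓝 0) (𝓝 δ) :=
      Continuous.tendsto' (by fun_prop) _ _ (by ring)
    have hev := (hlim.eventually (lt_mem_nhds hδ)).and (ge_mem_nhds (one_half_pos (α := ℝ)))
    obtain ⟨ε, hε, hε0⟩ := ((hev.filter_mono nhdsWithin_le_nhds).and
      (self_mem_nhdsWithin : Ioi (0 : ℝ) ∈ 𝓝[>] 0)).exists
    exact ⟨ε, ⟨by linarith [hε.1], hε.2⟩, hε0⟩
  refine ⟨ε, hε0, by linarith, ?_⟩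
  filter_upwards [eventually_folnerInv K hε0, eventually_le_card (2 * N)] with F hF hN S hSF hS
  refine ⟨hF.of_subset hSF hS hδ.le hεK, ?_⟩
  have : (2 * N : ℝ) ≤ F.card := mod_cast hN
  exact_mod_cast show (N : ℝ) ≤ S.card by nlinarith

end Folner

/-! ### Quasi-tilings of the space -/

section QuasiTiling

variable {G : Type u} {X : Type v} [Group G] [MulAction G X] {F L : Finset G} {ε : ℝ}

/-- The points outside `D` which some element of `L` moves into `D`. -/
def outerBoundary (L : Finset G) (D : Set X) : Set X := (⋃ l ∈ L, (l • ·) ⁻¹' D) \ D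

theorem mem_outerBoundary {D : Set X} {x : X} :
    x ∈ outerBoundary L D ↔ (∃ l ∈ L, l • x ∈ D) ∧ x ∉ D := by
  simp only [outerBoundary, Set.mem_sdiff, mem_iUnion, mem_preimage, exists_prop]

theorem outerBoundary_mono (D : Set X) (h : L ⊆ F) : outerBoundary L D ⊆ outerBoundary F D :=
  sdiff_subset_sdiff_left (biUnion_subset_biUnion_left h)

open scoped Classical in
/-- The elements of `F` that move `x` into `A`. -/
noncomputable def visits (F : Finset G) (A : Set X) (x : X) : Finset G :=
  F.filter fun f => f • x ∈ A

theorem mem_visits {A : Set X} {x : X} {f : G} : f ∈ visits F A x ↔ f ∈ F ∧ f • x ∈ A := by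
  classical exact Finset.mem_filter

theorem visits_subset (F : Finset G) (A : Set X) (x : X) : visits F A x ⊆ F :=
  fun _ hf => (mem_visits.1 hf).1

theorem visits_mono {A B : Set X} (h : A ⊆ B) (x : X) : visits F A x ⊆ visits F B x :=
  fun _ hf => mem_visits.2 ((mem_visits.1 hf).imp_right fun hfx => h hfx)

theorem card_visits_add_card_visits_compl (F : Finset G) (A : Set X) (x : X) :
    (visits F A x).card + (visits F Aᶜ x).card = F.card := by
  classical
  rw [← Finset.card_filter_add_card_filter_not (s := F) fun f => f • x ∈ A]
  congr! 2
  ext f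
  simp only [mem_visits, Finset.mem_filter, mem_compl_iff]

theorem card_visits_eq_sum_indicator (F : Finset G) (A : Set X) (x : X) :
    ((visits F A x).card : ℝ) = ∑ f ∈ F, ((f • ·) ⁻¹' A).indicator 1 x := by
  classical
  simp only [visits, indicator_apply, mem_preimage, Pi.one_apply, Finset.sum_boole]

section Measurable

variable [MeasurableSpace X] [MeasurableConstSMul G X]

theorem measurableSet_visits_eq {A : Set X} (hA : MeasurableSet A) (F S : Finset G) :
    MeasurableSet {x | visits F A x = S} := by
  classical
  have hset : {x | visits F A x = S} =
      ⋂ f ∈ F ∪ S, if f ∈ S then {x | f ∈ F ∧ f • x ∈ A} else {x | f • x ∈ A}ᶜ := by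
    ext x
    simp only [mem_ofPred_eq, mem_iInter, Finset.ext_iff, mem_visits, Finset.mem_union]
    refine forall_congr' fun f => ?_
    by_cases hfS : f ∈ S <;> by_cases hfF : f ∈ F <;> simp [hfS, hfF]
  rw [hset]
  refine Finset.measurableSet_biInter _ fun f _ => ?_
  have hfA : MeasurableSet {x : X | f • x ∈ A} := measurable_const_smul f hA
  split_ifs
  exacts [(MeasurableSet.const _).inter hfA, hfA.compl]

theorem mul_measureReal_le_card_mul_measureReal
    {A R : Set X} (hA : MeasurableSet A) {c : ℝ} (hc : 0 ≤ c)
    (hR : ∀ x ∈ R, c ≤ (visits F A x).card)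
    (μ : Measure X) [IsFiniteMeasure μ] [SMulInvariantMeasure G X μ] :
    c * μ.real R ≤ F.card * μ.real A := by
  have hpre (f : G) : MeasurableSet ((f • · : X → X) ⁻¹' A) := measurable_const_smul f hA
  have hint (f : G) : Integrable (((f • · : X → X) ⁻¹' A).indicator (1 : X → ℝ)) μ :=
    (integrable_const 1).indicator (hpre f)
  calc c * μ.real R ≤ c * μ.real {x | c ≤ (visits F A x).card} := by
        gcongr
        exacts [measure_ne_top _ _, hR]
    _ ≤ ∫ x, ((visits F A x).card : ℝ) ∂μ := by
        refine mul_meas_ge_le_integral_of_nonneg (.of_forall fun x => Nat.cast_nonneg _) ?_ c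
        simp only [card_visits_eq_sum_indicator]
        exact integrable_finsetSum _ fun f _ => hint f
    _ = F.card * μ.real A := by
        simp only [card_visits_eq_sum_indicator]
        rw [integral_finsetSum _ fun f _ => hint f]
        simp only [integral_indicator_one (hpre _), measureReal_def, measure_preimage_smul,
          Finset.sum_const, nsmul_eq_mul]

end Measurable

namespace TowerFamily

/-- The castle filling up the complement of `D` along the partial orbits `F • x`, `x ∈ B`: the
shape over `x` is the set of those `f ∈ F` with `f • x ∉ D`, provided that it makes up a proportion
of at least `1 - ε` of `F`. -/
noncomputable def greedyFilling (D B : Set X) (F : Finset G) (ε : ℝ) : TowerFamily G X where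
  ι := F.powerset.filter fun S => (1 - ε) * F.card ≤ S.card
  shape := fun S => S
  base := fun S => B ∩ {x | visits F Dᶜ x = S}

variable {D B : Set X} {T T' : TowerFamily G X}

section Greedy

variable {x : X} {f : G} {S : (greedyFilling D B F ε).ι}

theorem greedyFilling_shape_subset : (greedyFilling D B F ε).shape S ⊆ F :=
  Finset.mem_powerset.1 (Finset.mem_filter.1 (Subtype.prop S)).1

theorem visits_eq_of_mem_greedyFilling_base (hx : x ∈ (greedyFilling D B F ε).base S) :
    visits F Dᶜ x = (greedyFilling D B F ε).shape S :=
  hx.2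

theorem greedyFilling_smul_mem (hx : x ∈ (greedyFilling D B F ε).base S) (hf : f ∈ F) :
    f • x ∈ D ∪ (greedyFilling D B F ε).support := by
  by_cases hfx : f • x ∈ D
  · exact .inl hfx
  · refine .inr (smul_mem_support ?_ hx)
    rw [← visits_eq_of_mem_greedyFilling_base hx]
    exact mem_visits.2 ⟨hf, hfx⟩

theorem isCastle_greedyFilling (hB : IsTower G X F B) : (greedyFilling D B F ε).IsCastle := by
  intro S S' s hs t ht x hx y hy hxy
  obtain rfl : s = t := by
    by_contra hst
    exact (hB (greedyFilling_shape_subset hs) (greedyFilling_shape_subset ht) hst).ne_of_mem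
      (smul_mem_smul_set (inter_subset_left hx)) (smul_mem_smul_set (inter_subset_left hy)) hxy
  obtain rfl := smul_left_cancel s hxy
  exact ⟨Subtype.ext ((visits_eq_of_mem_greedyFilling_base hx).symm.trans
    (visits_eq_of_mem_greedyFilling_base hy)), rfl⟩

theorem disjoint_greedyFilling_support : Disjoint D (greedyFilling D B F ε).support := by
  refine disjoint_left.2 fun z hz hz' => ?_
  obtain ⟨S, s, hs, x, hx, rfl⟩ := mem_support.1 hz'
  rw [← visits_eq_of_mem_greedyFilling_base hx] at hs
  exact (mem_visits.1 hs).2 hz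

theorem le_card_visits_greedyFilling (hε : ε ≤ 1) (hx : x ∈ B) :
    ε * F.card ≤ (visits F (D ∪ (greedyFilling D B F ε).support) x).card := by
  by_cases hD : ε * F.card ≤ (visits F D x).card
  · exact hD.trans (Nat.cast_le.2 (Finset.card_le_card (visits_mono subset_union_left x)))
  have hcard : ((visits F D x).card : ℝ) + (visits F Dᶜ x).card = F.card :=
    mod_cast card_visits_add_card_visits_compl F D x
  have hmem : visits F Dᶜ x ∈ F.powerset.filter fun S => (1 - ε) * F.card ≤ S.card :=
    Finset.mem_filter.2 ⟨Finset.mem_powerset.2 (visits_subset _ _ _), by linarith⟩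
  have hbase : x ∈ (greedyFilling D B F ε).base ⟨_, hmem⟩ := ⟨hx, rfl⟩
  have hF : F ⊆ visits F (D ∪ (greedyFilling D B F ε).support) x := fun f hf =>
    mem_visits.2 ⟨hf, greedyFilling_smul_mem hbase hf⟩
  calc ε * F.card ≤ F.card := mul_le_of_le_one_left (Nat.cast_nonneg _) hε
    _ ≤ (visits F (D ∪ (greedyFilling D B F ε).support) x).card := by gcongr

end Greedy

variable [MeasurableSpace X]

/-- A castle `T` disjoint from `D`, with shapes large subsets of `F` and bases subordinate to `𝓑`,
such that every translate `F • x` of a point `x` of a base lies in `D ∪ T.support` and every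
translate `F • x` of a point `x` of a member of `𝓑` has a proportion of at least `ε` in
`D ∪ T.support`. -/
structure IsFilling (𝓑 : Set (Set X)) (D : Set X) (F : Finset G) (ε : ℝ)
    (T : TowerFamily G X) : Prop where
  measurableSet_base : ∀ i, MeasurableSet (T.base i)
  isCastle : T.IsCastle
  disjoint : Disjoint D T.support
  shape_subset : ∀ i, T.shape i ⊆ F
  le_card_shape : ∀ i, (1 - ε) * F.card ≤ (T.shape i).card
  base_subset : ∀ i, ∃ B ∈ 𝓑, T.base i ⊆ B
  smul_mem : ∀ i, ∀ x ∈ T.base i, ∀ f ∈ F, f • x ∈ D ∪ T.support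
  le_card_visits : ∀ B ∈ 𝓑, ∀ x ∈ B, ε * F.card ≤ (visits F (D ∪ T.support) x).card

variable {𝓑 𝓑' : Set (Set X)}

theorem IsFilling.sum (hT : IsFilling 𝓑 D F ε T) (hT' : IsFilling 𝓑' (D ∪ T.support) F ε T') :
    IsFilling (𝓑 ∪ 𝓑') D F ε (T.sum T') where
  measurableSet_base := Sum.rec hT.measurableSet_base hT'.measurableSet_base
  isCastle := hT.isCastle.sum hT'.isCastle (hT'.disjoint.mono_left subset_union_right)
  disjoint := by
    rw [support_sum, disjoint_union_right]
    exact ⟨hT.disjoint, hT'.disjoint.mono_left subset_union_left⟩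
  shape_subset := Sum.rec hT.shape_subset hT'.shape_subset
  le_card_shape := Sum.rec hT.le_card_shape hT'.le_card_shape
  base_subset := Sum.rec (fun i => (hT.base_subset i).imp fun _ h => ⟨.inl h.1, h.2⟩)
    fun i => (hT'.base_subset i).imp fun _ h => ⟨.inr h.1, h.2⟩
  smul_mem := by
    rw [support_sum, ← union_assoc]
    exact Sum.rec (fun i x hx f hf => .inl (hT.smul_mem i x hx f hf)) hT'.smul_mem
  le_card_visits := by
    rw [support_sum, ← union_assoc]
    rintro B (hB | hB) x hx
    · exact (hT.le_card_visits B hB x hx).trans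
        (Nat.cast_le.2 (Finset.card_le_card (visits_mono subset_union_left x)))
    · exact hT'.le_card_visits B hB x hx

theorem IsFilling.outerBoundary_subset [DecidableEq G] (hT : IsFilling 𝓑 D F ε T)
    (L : Finset G) : outerBoundary L (D ∪ T.support) ⊆ outerBoundary L D ∪
      ⋃ l ∈ L, ⋃ f ∈ F.filter fun f => l⁻¹ * f ∉ F, ⋃ i, (l⁻¹ * f) • T.base i := by
  intro x hx
  obtain ⟨⟨l, hl, hlx | hlx⟩, hxD⟩ := mem_outerBoundary.1 hx
  · exact .inl (mem_outerBoundary.2 ⟨⟨l, hl, hlx⟩, fun h => hxD (.inl h)⟩)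
  · obtain ⟨i, f, hf, y, hy, hfy⟩ := mem_support.1 hlx
    obtain rfl : (l⁻¹ * f) • y = x := by rw [mul_smul, hfy, inv_smul_smul]
    have hlf : l⁻¹ * f ∉ F := fun h => hxD (hT.smul_mem i y hy _ h)
    simp only [mem_union, mem_iUnion, Finset.mem_filter]
    exact .inr ⟨l, hl, f, ⟨hT.shape_subset i hf, hlf⟩, i, smul_mem_smul_set hy⟩

variable [MeasurableConstSMul G X]

theorem isFilling_greedyFilling (hD : MeasurableSet D) (hB : MeasurableSet B)
    (hF : IsTower G X F B) (hε : ε ≤ 1) : IsFilling {B} D F ε (greedyFilling D B F ε) where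
  measurableSet_base S := hB.inter (measurableSet_visits_eq hD.compl F S.1)
  isCastle := isCastle_greedyFilling hF
  disjoint := disjoint_greedyFilling_support
  shape_subset _ := greedyFilling_shape_subset
  le_card_shape S := (Finset.mem_filter.1 (Subtype.prop S)).2
  base_subset _ := ⟨B, rfl, inter_subset_left⟩
  smul_mem _ _ hx _ hf := greedyFilling_smul_mem hx hf
  le_card_visits := by
    rintro _ rfl x hx
    exact le_card_visits_greedyFilling hε hx

theorem exists_isFilling (hε : ε ≤ 1) (𝓑 : Finset (Set X)) (hm : ∀ B ∈ 𝓑, MeasurableSet B)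
    (hF : ∀ B ∈ 𝓑, IsTower G X F B) (hD : MeasurableSet D) :
    ∃ T : TowerFamily G X, IsFilling 𝓑 D F ε T := by
  induction 𝓑 using Finset.induction_on with
  | empty =>
    exact ⟨empty, nofun, isCastle_empty, by simp only [support_empty, disjoint_empty], nofun,
      nofun, nofun, nofun, by simp only [Finset.coe_empty, mem_empty_iff_false, false_imp_iff,
        implies_true]⟩
  | insert B 𝓑 _ ih =>
    rw [Finset.forall_mem_insert] at hm hF
    obtain ⟨T, hT⟩ := ih hm.2 hF.2
    rw [Finset.coe_insert, insert_eq, union_comm]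
    exact ⟨_, hT.sum (isFilling_greedyFilling
      (hD.union (measurableSet_support hT.measurableSet_base)) hm.1 hF.1 hε)⟩

variable {μ : Measure X} [IsProbabilityMeasure μ] [SMulInvariantMeasure G X μ]

theorem IsFilling.measureReal_compl_le (hT : IsFilling 𝓑 D F ε T) (h𝓑 : ⋃₀ 𝓑 = univ)
    (hF : F.Nonempty) (hε : 0 ≤ ε) (hD : MeasurableSet D) :
    μ.real (D ∪ T.support)ᶜ ≤ (1 - ε) * μ.real Dᶜ + ε * μ.real (outerBoundary F D) := by
  have hcount : ε * F.card * μ.real (Dᶜ \ outerBoundary F D) ≤ F.card * μ.real T.support := by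
    refine mul_measureReal_le_card_mul_measureReal (measurableSet_support hT.measurableSet_base)
      (by positivity) (fun x hx => ?_) μ
    obtain ⟨B, hB, hxB⟩ := sUnion_eq_univ_iff.1 h𝓑 x
    refine (hT.le_card_visits B hB x hxB).trans (Nat.cast_le.2 (Finset.card_le_card fun f hf => ?_))
    have hfD : f • x ∉ D := fun h =>
      hx.2 (mem_outerBoundary.2 ⟨⟨f, visits_subset _ _ _ hf, h⟩, hx.1⟩)
    exact mem_visits.2 ((mem_visits.1 hf).imp_right fun h => h.resolve_left hfD)
  have hsupport : ε * μ.real (Dᶜ \ outerBoundary F D) ≤ μ.real T.support := by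
    have hpos : (0 : ℝ) < F.card := mod_cast hF.card_pos
    exact le_of_mul_le_mul_left (by linarith) hpos
  have hcompl : μ.real (D ∪ T.support)ᶜ = μ.real Dᶜ - μ.real T.support := by
    have hm := measurableSet_support hT.measurableSet_base
    rw [probReal_compl_eq_one_sub (hD.union hm), probReal_compl_eq_one_sub hD,
      measureReal_union hT.disjoint hm]
    ring
  have hdiff : μ.real Dᶜ ≤ μ.real (Dᶜ \ outerBoundary F D) + μ.real (outerBoundary F D) :=
    (measureReal_mono (subset_sdiff_union _ _)).trans (measureReal_union_le _ _)
  nlinarith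

theorem IsFilling.mul_sum_measureReal_base_le_one (hT : IsFilling 𝓑 D F ε T) :
    (1 - ε) * F.card * ∑ i, μ.real (T.base i) ≤ 1 := by
  calc (1 - ε) * F.card * ∑ i, μ.real (T.base i)
      ≤ ∑ i, (T.shape i).card * μ.real (T.base i) := by
        rw [Finset.mul_sum]
        gcongr with i
        exact hT.le_card_shape i
    _ = μ.real T.support := (hT.isCastle.measureReal_support hT.measurableSet_base μ).symm
    _ ≤ 1 := measureReal_le_one

theorem IsFilling.measureReal_outerBoundary_le [DecidableEq G] (hT : IsFilling 𝓑 D F ε T)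
    (hε : ε < 1) {γ : ℝ} (hF : FolnerInv G L⁻¹ γ F) (hγ : 0 ≤ γ) :
    μ.real (outerBoundary L (D ∪ T.support)) ≤
      μ.real (outerBoundary L D) + L.card * (γ / (1 - ε)) := by
  have hε' : 0 < 1 - ε := by linarith
  have htranslates (l : G) (hl : l ∈ L) :
      μ.real (⋃ f ∈ F.filter fun f => l⁻¹ * f ∉ F, ⋃ i, (l⁻¹ * f) • T.base i) ≤ γ / (1 - ε) :=
    calc _ ≤ ∑ f ∈ F.filter fun f => l⁻¹ * f ∉ F, ∑ i, μ.real ((l⁻¹ * f) • T.base i) :=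
          (measureReal_biUnion_finset_le _ _).trans
            (Finset.sum_le_sum fun f _ => measureReal_iUnion_fintype_le _)
      _ = (F.filter fun f => l⁻¹ * f ∉ F).card * ∑ i, μ.real (T.base i) := by
          simp only [measureReal_smul, Finset.sum_const, nsmul_eq_mul]
      _ ≤ γ * F.card * ∑ i, μ.real (T.base i) := by
          gcongr
          exact hF.card_filter_mul_notMem_le (Finset.inv_mem_inv hl)
      _ = γ / (1 - ε) * ((1 - ε) * F.card * ∑ i, μ.real (T.base i)) := by field_simp
      _ ≤ γ / (1 - ε) :=
          mul_le_of_le_one_right (by positivity) hT.mul_sum_measureReal_base_le_one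
  calc μ.real (outerBoundary L (D ∪ T.support))
      ≤ μ.real (outerBoundary L D) + μ.real
          (⋃ l ∈ L, ⋃ f ∈ F.filter fun f => l⁻¹ * f ∉ F, ⋃ i, (l⁻¹ * f) • T.base i) :=
        (measureReal_mono (hT.outerBoundary_subset L)).trans (measureReal_union_le _ _)
    _ ≤ μ.real (outerBoundary L D) + L.card * (γ / (1 - ε)) := by
        rw [← nsmul_eq_mul]
        gcongr
        exact (measureReal_biUnion_finset_le _ _).trans (Finset.sum_le_card_nsmul _ _ _ htranslates)

theorem IsFilling.measureReal_compl_le_and_outerBoundary_le [DecidableEq G]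
    (hT : IsFilling 𝓑 D F ε T) (h𝓑 : ⋃₀ 𝓑 = univ) (hF : F.Nonempty) (hε : 0 ≤ ε) (hε1 : ε < 1)
    (hD : MeasurableSet D) {a β : ℝ} (hβ : 0 ≤ β)
    (hFL : FolnerInv G L⁻¹ ((1 - ε) * β / (2 * (L.card + 1))) F) (hcompl : μ.real Dᶜ ≤ a + β / 2)
    (hbdry : μ.real (outerBoundary (L ∪ F) D) ≤ β / 2) :
    μ.real (D ∪ T.support)ᶜ ≤ (1 - ε) * a + β ∧
      μ.real (outerBoundary L (D ∪ T.support)) ≤ β := by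
  have hε' : 0 < 1 - ε := by linarith
  have hbdry_mono {E : Finset G} (hE : E ⊆ L ∪ F) : μ.real (outerBoundary E D) ≤ β / 2 :=
    (measureReal_mono (outerBoundary_mono D hE)).trans hbdry
  constructor
  · calc μ.real (D ∪ T.support)ᶜ
        ≤ (1 - ε) * μ.real Dᶜ + ε * μ.real (outerBoundary F D) :=
          hT.measureReal_compl_le h𝓑 hF hε hD
      _ ≤ (1 - ε) * (a + β / 2) + ε * (β / 2) := by
          gcongr
          exact hbdry_mono Finset.subset_union_right
      _ ≤ (1 - ε) * a + β := by linarith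
  · have hsmall : L.card * ((1 - ε) * β / (2 * (L.card + 1)) / (1 - ε)) ≤ β / 2 := by
      field_simp
      linarith
    linarith [hT.measureReal_outerBoundary_le hε1 hFL (by positivity) (μ := μ),
      hbdry_mono Finset.subset_union_left]

/-- `𝓑` is a finite cover of the space by Borel bases of towers of shape `F`. -/
structure IsTowerCover (F : Finset G) (𝓑 : Finset (Set X)) : Prop where
  measurableSet : ∀ B ∈ 𝓑, MeasurableSet B
  isTower : ∀ B ∈ 𝓑, IsTower G X F B
  sUnion_eq : ⋃₀ (𝓑 : Set (Set X)) = univ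

theorem exists_isCastle_measureReal_compl_support_le_pow_add {Q : Finset G → Set X → Prop}
    [(folnerFilter G).NeBot] (hε : 0 ≤ ε) (hε1 : ε < 1)
    (hQ : ∀ᶠ F in folnerFilter G, ∃ 𝓑 : Finset (Set X), IsTowerCover F 𝓑 ∧
      ∀ B ∈ 𝓑, ∀ S ⊆ F, (1 - ε) * F.card ≤ S.card → ∀ V ⊆ B, Q S V)
    (n : ℕ) : ∀ (L : Finset G) (β : ℝ), 0 < β → ∃ T : TowerFamily G X,
      (∀ i, MeasurableSet (T.base i)) ∧ T.IsCastle ∧ (∀ i, Q (T.shape i) (T.base i)) ∧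
      ∀ (μ : Measure X) [IsProbabilityMeasure μ] [SMulInvariantMeasure G X μ],
        μ.real T.supportᶜ ≤ (1 - ε) ^ n + β ∧ μ.real (outerBoundary L T.support) ≤ β := by
  classical
  induction n with
  | zero =>
    intro L β hβ
    refine ⟨empty, nofun, isCastle_empty, nofun, fun μ _ _ => ?_⟩
    simp [outerBoundary, hβ.le]
  | succ n ih =>
    intro L β hβ
    have hγ : 0 < (1 - ε) * β / (2 * (L.card + 1)) :=
      div_pos (mul_pos (sub_pos.2 hε1) hβ) (by positivity)
    obtain ⟨F, ⟨𝓑, h𝓑, hQ𝓑⟩, hF, hFL⟩ :=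
      (hQ.and (eventually_nonempty_and_folnerInv L⁻¹ hγ)).exists
    obtain ⟨T, hTm, hTc, hTQ, hT⟩ := ih (L ∪ F) (β / 2) (half_pos hβ)
    have hD := measurableSet_support hTm
    obtain ⟨T', hT'⟩ := exists_isFilling hε1.le 𝓑 h𝓑.measurableSet h𝓑.isTower hD
    have hTQ' (i) : Q (T'.shape i) (T'.base i) := by
      obtain ⟨B, hB, hiB⟩ := hT'.base_subset i
      exact hQ𝓑 B hB _ (hT'.shape_subset i) (hT'.le_card_shape i) _ hiB
    refine ⟨T.sum T', Sum.rec hTm hT'.measurableSet_base, hTc.sum hT'.isCastle hT'.disjoint,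
      Sum.rec hTQ hTQ', fun μ _ _ => ?_⟩
    rw [support_sum, pow_succ']
    exact hT'.measureReal_compl_le_and_outerBoundary_le h𝓑.sUnion_eq hF hε hε1 hD hβ.le hFL
      (hT μ).1 (hT μ).2

theorem exists_isCastle_measureReal_compl_support_le {Q : Finset G → Set X → Prop}
    [(folnerFilter G).NeBot] (hε : 0 < ε) (hε1 : ε < 1)
    (hQ : ∀ᶠ F in folnerFilter G, ∃ 𝓑 : Finset (Set X), IsTowerCover F 𝓑 ∧
      ∀ B ∈ 𝓑, ∀ S ⊆ F, (1 - ε) * F.card ≤ S.card → ∀ V ⊆ B, Q S V) {η : ℝ} (hη : 0 < η) :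
    ∃ T : TowerFamily G X, (∀ i, MeasurableSet (T.base i)) ∧ T.IsCastle ∧
      (∀ i, Q (T.shape i) (T.base i)) ∧
      ∀ (μ : Measure X) [IsProbabilityMeasure μ] [SMulInvariantMeasure G X μ],
        μ.real T.supportᶜ ≤ η := by
  obtain ⟨n, hn⟩ := exists_pow_lt_of_lt_one (half_pos hη) (by linarith : 1 - ε < 1)
  obtain ⟨T, hTm, hTc, hTQ, hT⟩ :=
    exists_isCastle_measureReal_compl_support_le_pow_add hε.le hε1 hQ n ∅ (η / 2) (half_pos hη)
  exact ⟨T, hTm, hTc, hTQ, fun μ _ _ => by linarith [(hT μ).1]⟩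

end TowerFamily

end QuasiTiling

/-! ### Open castles for free actions -/

section OpenCastle

variable {G : Type u} {X : Type v} [Group G] [MulAction G X]

theorem FreeAction.smul_injective (hfree : FreeAction G X) (x : X) :
    Function.Injective fun g : G => g • x := fun s t hst =>
  (inv_mul_eq_one.1 <| hfree (t⁻¹ * s) x <|
    (mul_smul _ _ _).trans <| (congrArg (t⁻¹ • ·) hst).trans <| inv_smul_smul t x).symm

theorem eventually_smul_subset_smallSets [TopologicalSpace X] [ContinuousConstSMul G X] (g : G)
    {x : X} {U : Set X} (hU : U ∈ 𝓝 (g • x)) : ∀ᶠ B in (𝓝 x).smallSets, g • B ⊆ U :=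
  eventually_smallSets.2 ⟨(g • ·) ⁻¹' U,
    (continuous_const_smul g).continuousAt.preimage_mem_nhds hU, fun _ hB => image_subset_iff.2 hB⟩

theorem eventually_diam_smul_lt_smallSets [PseudoMetricSpace X] [ContinuousConstSMul G X] (g : G)
    (x : X) {δ : ℝ} (hδ : 0 < δ) : ∀ᶠ B in (𝓝 x).smallSets, Metric.diam (g • B) < δ := by
  have hδ3 : 0 < δ / 3 := by positivity
  filter_upwards [eventually_smul_subset_smallSets g (Metric.closedBall_mem_nhds _ hδ3)] with B hB
  linarith [Metric.diam_le_of_subset_closedBall hδ3.le hB]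

theorem FreeAction.eventually_isTower_smallSets [TopologicalSpace X] [T2Space X]
    [ContinuousConstSMul G X] (hfree : FreeAction G X) (F : Finset G) (x : X) :
    ∀ᶠ B in (𝓝 x).smallSets, IsTower G X F B := by
  have hpair (s t : G) (hst : s ≠ t) : ∀ᶠ B in (𝓝 x).smallSets, Disjoint (s • B) (t • B) := by
    obtain ⟨U, hU, V, hV, hUV⟩ :=
      Filter.disjoint_iff.1 (disjoint_nhds_nhds.2 ((hfree.smul_injective x).ne hst))
    filter_upwards [eventually_smul_subset_smallSets s hU,
      eventually_smul_subset_smallSets t hV] with B hBU hBV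
    exact hUV.mono hBU hBV
  have hall := F.eventually_all.2 fun s (_ : s ∈ F) => F.eventually_all.2 fun t (_ : t ∈ F) =>
    eventually_imp_distrib_left.2 (hpair s t)
  filter_upwards [hall] with B hB s hs t ht hst
  exact hB s hs t ht hst

theorem FreeAction.exists_isTowerCover [MetricSpace X] [CompactSpace X] [MeasurableSpace X]
    [BorelSpace X] [ContinuousConstSMul G X] (hfree : FreeAction G X) (F : Finset G) {δ : ℝ}
    (hδ : 0 < δ) : ∃ 𝓑 : Finset (Set X), TowerFamily.IsTowerCover F 𝓑 ∧
      ∀ B ∈ 𝓑, ∀ f ∈ F, Metric.diam (f • B) < δ := by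
  classical
  have hsmall (x : X) : ∃ B ∈ 𝓝 x, IsOpen B ∧ IsTower G X F B ∧
      ∀ f ∈ F, Metric.diam (f • B) < δ := by
    obtain ⟨U, hU, h⟩ := eventually_smallSets.1 <| (hfree.eventually_isTower_smallSets F x).and <|
      F.eventually_all.2 fun f (_ : f ∈ F) => eventually_diam_smul_lt_smallSets f x hδ
    exact ⟨interior U, interior_mem_nhds.2 hU, isOpen_interior, h _ interior_subset⟩
  choose B hB hBo hBt hBd using hsmall
  obtain ⟨t, ht⟩ := CompactSpace.elim_nhds_subcover B hB
  refine ⟨t.image B, ⟨?_, ?_, ?_⟩, ?_⟩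
  · exact Finset.forall_mem_image.2 fun x _ => (hBo x).measurableSet
  · exact Finset.forall_mem_image.2 fun x _ => hBt x
  · rw [Finset.coe_image, sUnion_image]
    exact ht
  · exact Finset.forall_mem_image.2 fun x _ => hBd x

theorem diam_smul_mono [PseudoMetricSpace X] [CompactSpace X] (g : G) {A B : Set X} (h : A ⊆ B) :
    Metric.diam (g • A) ≤ Metric.diam (g • B) :=
  Metric.diam_mono (smul_set_mono h) Metric.isBounded_of_compactSpace

section Thickening

variable [MetricSpace X] [CompactSpace X] [ContinuousConstSMul G X] {C D : Set X}

theorem eventually_smul_cthickening_subset {g : G} {U : Set X} (hC : IsClosed C) (hU : IsOpen U)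
    (h : g • C ⊆ U) : ∀ᶠ r in 𝓝[>] (0 : ℝ), g • Metric.cthickening r C ⊆ U := by
  obtain ⟨r, hr, hrU⟩ := hC.isCompact.exists_cthickening_subset_open
    (hU.preimage (continuous_const_smul g)) (image_subset_iff.1 h)
  filter_upwards [Ioc_mem_nhdsGT hr] with ρ hρ
  exact image_subset_iff.2 ((Metric.cthickening_mono hρ.2 C).trans hrU)

theorem eventually_disjoint_smul_cthickening {s t : G} (hC : IsClosed C) (hD : IsClosed D)
    (h : Disjoint (s • C) (t • D)) :
    ∀ᶠ r in 𝓝[>] (0 : ℝ), Disjoint (s • Metric.cthickening r C) (t • Metric.cthickening r D) := by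
  obtain ⟨U, V, hU, hV, hCU, hDV, hUV⟩ :=
    normal_separation (hC.smul s) (hD.smul t) h
  filter_upwards [eventually_smul_cthickening_subset hC hU hCU,
    eventually_smul_cthickening_subset hD hV hDV] with r hr hr'
  exact hUV.mono hr hr'

theorem eventually_diam_smul_cthickening_lt {g : G} {δ : ℝ} (hC : IsClosed C)
    (h : Metric.diam (g • C) < δ) :
    ∀ᶠ r in 𝓝[>] (0 : ℝ), Metric.diam (g • Metric.cthickening r C) < δ := by
  set ε := (δ - Metric.diam (g • C)) / 3 with hε
  have hε0 : 0 < ε := by linarith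
  filter_upwards [eventually_smul_cthickening_subset hC Metric.isOpen_thickening
    (Metric.self_subset_thickening hε0 (g • C))] with r hr
  calc Metric.diam (g • Metric.cthickening r C)
      ≤ Metric.diam (Metric.thickening ε (g • C)) :=
        Metric.diam_mono hr Metric.isBounded_of_compactSpace
    _ ≤ Metric.diam (g • C) + 2 * ε := Metric.diam_thickening_le _ hε0.le
    _ < δ := by linarith

end Thickening

namespace TowerFamily

/-- A castle with open bases, disjoint even after passing to the closures of the bases, whose
shapes are `(K, δ)`-invariant and have at least `N` elements and whose levels have diameter less
than `δ`. -/
structure IsOpenCastle [MetricSpace X] (K : Finset G) (δ : ℝ) (N : ℕ) (T : TowerFamily G X) :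
    Prop where
  isOpen_base : ∀ i, IsOpen (T.base i)
  isCastle_closure : (T.withBase fun i => closure (T.base i)).IsCastle
  folnerInv : ∀ i, FolnerInv G K δ (T.shape i)
  le_card : ∀ i, N ≤ (T.shape i).card
  diam_lt : ∀ i, ∀ s ∈ T.shape i, Metric.diam (s • closure (T.base i)) < δ

theorem IsCastle.eventually_cthickening [MetricSpace X] [CompactSpace X] [ContinuousConstSMul G X]
    {T : TowerFamily G X} (hT : T.IsCastle) (hcl : ∀ i, IsClosed (T.base i)) :
    ∀ᶠ r in 𝓝[>] (0 : ℝ), (T.withBase fun i => Metric.cthickening r (T.base i)).IsCastle := by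
  have hpair (i j) (s) (hs : s ∈ T.shape i) (t) (ht : t ∈ T.shape j) (hne : ¬(i = j ∧ s = t)) :
      ∀ᶠ r in 𝓝[>] (0 : ℝ), Disjoint (s • Metric.cthickening r (T.base i))
        (t • Metric.cthickening r (T.base j)) := by
    refine eventually_disjoint_smul_cthickening (hcl i) (hcl j) (disjoint_left.2 ?_)
    rintro _ ⟨x, hx, rfl⟩ ⟨y, hy, hxy⟩
    exact hne (hT i j s hs t ht x hx y hy hxy.symm)
  have hall := eventually_all.2 fun i => eventually_all.2 fun j =>
    (T.shape i).eventually_all.2 fun s hs => (T.shape j).eventually_all.2 fun t ht =>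
      eventually_imp_distrib_left.2 (hpair i j s hs t ht)
  filter_upwards [hall] with r hr i j s hs t ht x hx y hy hxy
  by_contra hne
  exact (hr i j s hs t ht hne).ne_of_mem (smul_mem_smul_set hx) (smul_mem_smul_set hy) hxy

theorem IsCastle.exists_isClosed_subset_lt_measureReal_support [TopologicalSpace X]
    [MeasurableSpace X] [BorelSpace X] [MeasurableConstSMul G X] {T : TowerFamily G X}
    (hT : T.IsCastle) (hm : ∀ i, MeasurableSet (T.base i)) (μ : Measure X) [IsFiniteMeasure μ]
    [μ.WeaklyRegular] [SMulInvariantMeasure G X μ] {η : ℝ} (hη : 0 < η) :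
    ∃ C : T.ι → Set X, (∀ i, C i ⊆ T.base i) ∧ (∀ i, IsClosed (C i)) ∧
      μ.real T.support - η < μ.real (T.withBase C).support := by
  obtain ⟨ε, hε, hεη⟩ := exists_pos_mul_lt hη (∑ i, ((T.shape i).card : ℝ))
  have happrox (i) : ∃ C ⊆ T.base i, IsClosed C ∧ μ.real (T.base i) ≤ μ.real C + ε := by
    obtain ⟨C, hCB, hC, hlt⟩ := (hm i).exists_isClosed_lt_add (measure_ne_top μ _)
      (ENNReal.ofReal_pos.2 hε).ne'
    refine ⟨C, hCB, hC, ?_⟩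
    have := ENNReal.toReal_mono (by finiteness) hlt.le
    rwa [ENNReal.toReal_add (by finiteness) (by finiteness), ENNReal.toReal_ofReal hε.le] at this
  choose C hCB hC hCε using happrox
  refine ⟨C, hCB, hC, ?_⟩
  rw [hT.measureReal_support hm,
    (hT.withBase hCB).measureReal_support fun i => (hC i).measurableSet]
  have : ∑ i, (T.shape i).card * μ.real (T.base i) ≤
      ∑ i, (T.shape i).card * (μ.real (C i) + ε) := by
    gcongr with i
    exact hCε i
  simp only [mul_add, Finset.sum_add_distrib, ← Finset.sum_mul] at this
  change ∑ i, (T.shape i).card * μ.real (T.base i) - η < ∑ i, (T.shape i).card * μ.real (C i)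
  linarith

variable [MetricSpace X] [CompactSpace X] [MeasurableSpace X] [BorelSpace X]
  [ContinuousConstSMul G X] [Infinite G] [(folnerFilter G).NeBot]

theorem exists_isCastle_folnerInv_diam_lt (hfree : FreeAction G X) (K : Finset G) {δ : ℝ}
    (hδ : 0 < δ) (N : ℕ) {η : ℝ} (hη : 0 < η) :
    ∃ T : TowerFamily G X, (∀ i, MeasurableSet (T.base i)) ∧ T.IsCastle ∧
      (∀ i, FolnerInv G K δ (T.shape i) ∧ N ≤ (T.shape i).card) ∧
      (∀ i, ∀ s ∈ T.shape i, Metric.diam (s • T.base i) < δ) ∧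
      ∀ (μ : Measure X) [IsProbabilityMeasure μ] [SMulInvariantMeasure G X μ],
        μ.real T.supportᶜ ≤ η := by
  obtain ⟨ε, hε, hε1, hF⟩ := exists_eventually_forall_subset_folnerInv K hδ N
  obtain ⟨T, hTm, hT, hTQ, hTμ⟩ := exists_isCastle_measureReal_compl_support_le hε hε1
    (Q := fun S V => (FolnerInv G K δ S ∧ N ≤ S.card) ∧ ∀ s ∈ S, Metric.diam (s • V) < δ)
    (hF.mono fun F hF => (hfree.exists_isTowerCover F hδ).imp fun 𝓑 h𝓑 => ⟨h𝓑.1,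
      fun B hB S hSF hS V hVB => ⟨hF S hSF hS, fun s hs =>
        (diam_smul_mono s hVB).trans_lt (h𝓑.2 B hB s (hSF hs))⟩⟩) hη
  exact ⟨T, hTm, hT, fun i => (hTQ i).1, fun i => (hTQ i).2, fun μ _ _ => hTμ μ⟩

theorem exists_isOpenCastle (hfree : FreeAction G X) (K : Finset G) {δ : ℝ} (hδ : 0 < δ) (N : ℕ)
    {η : ℝ} (hη : 0 < η) (μ : Measure X) [IsProbabilityMeasure μ] [SMulInvariantMeasure G X μ] :
    ∃ T : TowerFamily G X, T.IsOpenCastle K δ N ∧ 1 - η < μ.real T.support := by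
  obtain ⟨T, hTm, hT, hTS, hTd, hTμ⟩ :=
    exists_isCastle_folnerInv_diam_lt hfree K hδ N (half_pos hη)
  obtain ⟨C, hCT, hC, hCμ⟩ := hT.exists_isClosed_subset_lt_measureReal_support hTm μ (half_pos hη)
  have hCd (i) : ∀ s ∈ T.shape i, Metric.diam (s • C i) < δ := fun s hs =>
    (diam_smul_mono s (hCT i)).trans_lt (hTd i s hs)
  obtain ⟨r, ⟨hr, hrd⟩, hr0⟩ := (((hT.withBase hCT).eventually_cthickening hC).and <|
    eventually_all.2 fun i => (T.shape i).eventually_all.2 fun s hs =>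
      eventually_diam_smul_cthickening_lt (hC i) (hCd i s hs)).and self_mem_nhdsWithin |>.exists
  have hcl (i) : closure (Metric.thickening r (C i)) ⊆ Metric.cthickening r (C i) :=
    Metric.closure_thickening_subset_cthickening r (C i)
  refine ⟨T.withBase fun i => Metric.thickening r (C i), ⟨fun i => Metric.isOpen_thickening,
    hr.withBase hcl, fun i => (hTS i).1, fun i => (hTS i).2,
    fun i s hs => (diam_smul_mono s (hcl i)).trans_lt (hrd i s hs)⟩, ?_⟩
  have hCr : μ.real (T.withBase C).support ≤
      μ.real (T.withBase fun i => Metric.thickening r (C i)).support :=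
    measureReal_mono (support_withBase_subset (T := T.withBase fun i => Metric.thickening r (C i))
      fun i => Metric.self_subset_thickening hr0 (C i))
  linarith [hTμ μ, probReal_compl_eq_one_sub (μ := μ) (measurableSet_support hTm)]

end TowerFamily

end OpenCastle

/-! ### Invariant and ergodic probability measures -/

section ErgodicMaximizers

theorem map_smul_cond {G : Type u} [Group G] {X : Type v} [MeasurableSpace X] [MulAction G X]
    [MeasurableConstSMul G X] {μ : Measure X} (hμ : ∀ g : G, μ.map (g • ·) = μ) {A : Set X}
    (hA : MeasurableSet A) (hinv : ∀ g : G, g • A = A) (g : G) :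
    (ProbabilityTheory.cond μ A).map (g • ·) = ProbabilityTheory.cond μ A := by
  have hpre : (g • ·) ⁻¹' A = A := by rw [preimage_smul, hinv]
  have hrestrict := Measure.restrict_map (μ := μ) (measurable_const_smul g) hA
  rw [hμ g, hpre] at hrestrict
  rw [ProbabilityTheory.cond, Measure.map_smul, ← hrestrict]

variable {X : Type v} [MeasurableSpace X] [TopologicalSpace X]

theorem lowerSemicontinuous_measureReal [OpensMeasurableSpace X] [HasOuterApproxClosed X]
    {U : Set X} (hU : IsOpen U) :
    LowerSemicontinuous fun μ : ProbabilityMeasure X => (μ : Measure X).real U := by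
  intro μ c hc
  rcases lt_or_ge c 0 with hc0 | hc0
  · exact .of_forall fun ν => hc0.trans_le measureReal_nonneg
  have hliminf := ProbabilityMeasure.le_liminf_measure_open_of_tendsto (tendsto_id (x := 𝓝 μ)) hU
  have hlt : ENNReal.ofReal c < (μ : Measure X) U :=
    (ENNReal.ofReal_lt_iff_lt_toReal hc0 (measure_ne_top _ _)).2 hc
  filter_upwards [eventually_lt_of_lt_liminf (hlt.trans_le hliminf)] with ν hν
  exact (ENNReal.ofReal_lt_iff_lt_toReal hc0 (measure_ne_top _ _)).1 hν

theorem upperSemicontinuous_measureReal [OpensMeasurableSpace X] [HasOuterApproxClosed X]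
    {C : Set X} (hC : IsClosed C) :
    UpperSemicontinuous fun μ : ProbabilityMeasure X => (μ : Measure X).real C := by
  intro μ c hc
  have hcompl (ν : ProbabilityMeasure X) := probReal_compl_eq_one_sub (μ := (ν : Measure X))
    hC.measurableSet
  filter_upwards [lowerSemicontinuous_measureReal hC.isOpen_compl μ (1 - c)
    (by linarith [hcompl μ])] with ν hν
  linarith [hcompl ν]

variable [BorelSpace X]

theorem isClosed_MG {G : Type u} [Group G] [MulAction G X] [HasOuterApproxClosed X]
    [ContinuousConstSMul G X] : IsClosed (MG G X) := by
  have hMG : MG G X = ⋂ g : G, {μ : ProbabilityMeasure X |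
      μ.map (f := (g • ·)) (measurable_const_smul g).aemeasurable = μ} := by
    ext μ
    simp only [MG, InvariantMeasure, mem_iInter, mem_ofPred_eq,
      ← ProbabilityMeasure.toMeasure_injective.eq_iff]
    rfl
  rw [hMG]
  exact isClosed_iInter fun g => isClosed_eq
    (ProbabilityMeasure.continuous_map (continuous_const_smul g)) continuous_id

/-- The integrals of all continuous functions against `μ`, embedding the probability measures
into the locally convex space `C(X, ℝ) → ℝ`, where the Krein–Milman theorem applies. -/
noncomputable def integrals (μ : ProbabilityMeasure X) : C(X, ℝ) → ℝ :=
  fun f => ∫ x, f x ∂(μ : Measure X)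

theorem integrals_injective [HasOuterApproxClosed X] :
    Function.Injective (integrals (X := X)) := fun _ _ h =>
  ProbabilityMeasure.toMeasure_injective <|
    ext_of_forall_integral_eq_of_IsFiniteMeasure fun f => congrFun h f.toContinuousMap

variable [CompactSpace X]

theorem continuous_integrals : Continuous (integrals (X := X)) :=
  continuous_pi fun f => ProbabilityMeasure.continuous_integral_continuousMap f

theorem integrable_continuousMap (μ : Measure X) [IsFiniteMeasure μ] (f : C(X, ℝ)) :
    Integrable f μ :=
  f.continuous.integrable_of_hasCompactSupport (HasCompactSupport.of_compactSpace _)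

variable [HasOuterApproxClosed X]

open scoped NNReal

theorem integrals_mem_openSegment_iff {μ ν ν' : ProbabilityMeasure X} :
    integrals μ ∈ openSegment ℝ (integrals ν) (integrals ν') ↔
      ∃ a b : ℝ≥0, 0 < a ∧ 0 < b ∧ a + b = 1 ∧ (μ : Measure X) = a • (ν : Measure X) + b • ν' := by
  have hint (a b : ℝ≥0) (f : C(X, ℝ)) : ∫ x, f x ∂(a • (ν : Measure X) + b • (ν' : Measure X)) =
      a * integrals ν f + b * integrals ν' f := by
    rw [integral_add_measure (integrable_continuousMap _ f) (integrable_continuousMap _ f),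
      integral_smul_nnreal_measure, integral_smul_nnreal_measure]
    rfl
  constructor
  · rintro ⟨a, b, ha, hb, hab, h⟩
    lift a to ℝ≥0 using ha.le
    lift b to ℝ≥0 using hb.le
    refine ⟨a, b, mod_cast ha, mod_cast hb, mod_cast hab, ?_⟩
    refine ext_of_forall_integral_eq_of_IsFiniteMeasure fun f => ?_
    exact (congrFun h f.toContinuousMap).symm.trans (hint a b f.toContinuousMap).symm
  · rintro ⟨a, b, ha, hb, hab, h⟩
    refine ⟨a, b, mod_cast ha, mod_cast hb, mod_cast hab, funext fun f => ?_⟩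
    simp only [integrals, h]
    exact (hint a b f).symm

variable {G : Type u} [Group G] [MulAction G X]

theorem isExtreme_integrals_image_maximizers (C : Set X) :
    IsExtreme ℝ (integrals '' MG G X) (integrals '' {μ ∈ MG G X | ∀ ν ∈ MG G X,
      (ν : Measure X).real C ≤ (μ : Measure X).real C}) := by
  refine ⟨image_mono fun μ hμ => hμ.1, ?_⟩
  rintro _ ⟨ν, hν, rfl⟩ _ ⟨ν', hν', rfl⟩ _ ⟨μ, ⟨_, hmax⟩, rfl⟩ hseg
  obtain ⟨a, b, ha, hb, hab, h⟩ := integrals_mem_openSegment_iff.1 hseg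
  refine mem_image_of_mem _ ⟨hν, fun ξ hξ => (hmax ξ hξ).trans ?_⟩
  have hμC : (μ : Measure X).real C = a * (ν : Measure X).real C + b * (ν' : Measure X).real C := by
    rw [h, measureReal_add_apply, measureReal_nnreal_smul_apply, measureReal_nnreal_smul_apply]
  have ha' : (0 : ℝ) < a := mod_cast ha
  refine le_of_mul_le_mul_left ?_ ha'
  calc (a : ℝ) * (μ : Measure X).real C
      = (a + b) * (μ : Measure X).real C - b * (μ : Measure X).real C := by ring
    _ ≤ (μ : Measure X).real C - b * (ν' : Measure X).real C := by
        rw [show (a + b : ℝ) = 1 from mod_cast hab, one_mul]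
        gcongr
        exact hmax ν' hν'
    _ = a * (ν : Measure X).real C := by rw [hμC]; ring

theorem mem_EG_of_integrals_mem_extremePoints [MeasurableConstSMul G X] {μ : ProbabilityMeasure X}
    (hμ : integrals μ ∈ (integrals '' MG G X).extremePoints ℝ) : μ ∈ EG G X := by
  obtain ⟨⟨μ', hμ', hμμ'⟩, hext⟩ := hμ
  obtain rfl := integrals_injective hμμ'
  refine ⟨hμ', fun A hA hinv => or_iff_not_imp_left.2 fun hA0 => by_contra fun hA1 => ?_⟩
  have hA0' : (μ' : Measure X) A ≠ 0 := fun h => hA0 ((μ'.null_iff_toMeasure_null A).2 h)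
  have hAc : (μ' : Measure X) Aᶜ ≠ 0 := fun h =>
    hA1 (by simp only [ProbabilityMeasure.coeFn_def, (prob_compl_eq_zero_iff hA).1 h,
      ENNReal.toNNReal_one])
  let ν : ProbabilityMeasure X := ⟨_, ProbabilityTheory.cond_isProbabilityMeasure hA0'⟩
  let ν' : ProbabilityMeasure X := ⟨_, ProbabilityTheory.cond_isProbabilityMeasure hAc⟩
  have hν : ν ∈ MG G X := map_smul_cond hμ' hA hinv
  have hν' : ν' ∈ MG G X :=
    map_smul_cond hμ' hA.compl fun g => by rw [smul_set_compl, hinv]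
  have hseg : integrals μ' ∈ openSegment ℝ (integrals ν) (integrals ν') := by
    refine integrals_mem_openSegment_iff.2 ⟨μ' A, μ' Aᶜ, pos_iff_ne_zero.2 hA0,
      pos_iff_ne_zero.2 fun h => hAc ((μ'.null_iff_toMeasure_null _).1 h), ?_,
      Measure.ext fun B _ => ?_⟩
    · rw [← ENNReal.coe_inj, ENNReal.coe_add, ProbabilityMeasure.ennreal_coeFn_eq_coeFn_toMeasure,
        ProbabilityMeasure.ennreal_coeFn_eq_coeFn_toMeasure, prob_add_prob_compl hA,
        ENNReal.coe_one]
    · rw [← ProbabilityTheory.cond_add_cond_compl_eq hA (μ' : Measure X)]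
      simp only [Measure.coe_add, Pi.add_apply, Measure.smul_apply, ENNReal.smul_def, smul_eq_mul,
        ProbabilityMeasure.ennreal_coeFn_eq_coeFn_toMeasure, mul_comm]
      rfl
  have hνμ : ν = μ' := integrals_injective (hext ⟨ν, hν, rfl⟩ ⟨ν', hν', rfl⟩ hseg)
  refine hA1 ?_
  rw [← hνμ, ProbabilityMeasure.coeFn_def]
  simp [ν, ProbabilityTheory.cond_apply_self hA0' (measure_ne_top _ _)]

variable [T2Space X] [ContinuousConstSMul G X]

theorem exists_mem_EG_forall_measureReal_le {C : Set X} (hC : IsClosed C)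
    (hne : (MG G X).Nonempty) :
    ∃ μ ∈ EG G X, ∀ ν ∈ MG G X, (ν : Measure X).real C ≤ (μ : Measure X).real C := by
  have husc := upperSemicontinuous_measureReal hC
  have hcompact : IsCompact (MG G X) := isClosed_MG.isCompact
  obtain ⟨μ₀, hμ₀, hmax⟩ := (husc.upperSemicontinuousOn _).exists_isMaxOn hne hcompact
  have hmaximizers : {μ ∈ MG G X | ∀ ν ∈ MG G X, (ν : Measure X).real C ≤ (μ : Measure X).real C} =
      MG G X ∩ {μ | (μ₀ : Measure X).real C ≤ (μ : Measure X).real C} := by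
    ext μ
    exact and_congr_right fun _ => ⟨fun h => h μ₀ hμ₀, fun h ν hν => (hmax hν).trans h⟩
  have hext := isExtreme_integrals_image_maximizers (G := G) C
  rw [hmaximizers] at hext
  obtain ⟨p, hp⟩ := ((hcompact.inter_right
    (husc.isClosed_preimage ((μ₀ : Measure X).real C))).image
    continuous_integrals).extremePoints_nonempty
      ⟨_, mem_image_of_mem _ ⟨hμ₀, mem_preimage.2 (mem_Ici.2 le_rfl)⟩⟩
  obtain ⟨μ, ⟨_, hμ⟩, rfl⟩ := hp.1
  exact ⟨μ, mem_EG_of_integrals_mem_extremePoints (hext.extremePoints_subset_extremePoints hp),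
    fun ν hν => (hmax hν).trans hμ⟩

theorem measureReal_le_of_forall_mem_EG {C : Set X} (hC : IsClosed C) {c : ℝ}
    (h : ∀ μ ∈ EG G X, (μ : Measure X).real C ≤ c) {ν : ProbabilityMeasure X} (hν : ν ∈ MG G X) :
    (ν : Measure X).real C ≤ c := by
  obtain ⟨μ, hμ, hmax⟩ := exists_mem_EG_forall_measureReal_le (G := G) hC ⟨ν, hν⟩
  exact (hmax ν hν).trans (h μ hμ)

end ErgodicMaximizers

/-! ### The mean ergodic theorem, uniformly over a compact set of ergodic measures -/

section Averages

variable {G : Type u} [Group G] {X : Type v} [TopologicalSpace X] [MulAction G X]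
  [ContinuousConstSMul G X]

/-- The Koopman operator `u ↦ u (g • ·)` on continuous functions. -/
def koopman (g : G) : C(X, ℝ) →ₗ[ℝ] C(X, ℝ) :=
  (ContinuousMap.compRightAlgHom ℝ ℝ ⟨(g • ·), continuous_const_smul g⟩).toLinearMap

theorem koopman_apply (g : G) (u : C(X, ℝ)) (x : X) : koopman g u x = u (g • x) :=
  rfl

theorem koopman_koopman (g h : G) (u : C(X, ℝ)) :
    koopman h (koopman g u) = koopman (g * h) u := by
  ext x
  simp only [koopman_apply, mul_smul]

/-- The ergodic average of a continuous function over the translates by `F`. -/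
noncomputable def ergodicAverage (F : Finset G) : C(X, ℝ) →ₗ[ℝ] C(X, ℝ) :=
  (F.card : ℝ)⁻¹ • ∑ s ∈ F, koopman s

theorem ergodicAverage_apply (F : Finset G) (u : C(X, ℝ)) (x : X) :
    ergodicAverage F u x = (F.card : ℝ)⁻¹ * ∑ s ∈ F, u (s • x) := by
  simp only [ergodicAverage, LinearMap.smul_apply, LinearMap.sum_apply, ContinuousMap.smul_apply,
    ContinuousMap.sum_apply, smul_eq_mul, koopman_apply]

theorem ergodicAverage_const {F : Finset G} (hF : F.Nonempty) (c : ℝ) :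
    ergodicAverage F (.const X c) = .const X c := by
  ext x
  have hcard : (F.card : ℝ) ≠ 0 := mod_cast hF.card_ne_zero
  simp only [ergodicAverage_apply, ContinuousMap.const_apply, Finset.sum_const, nsmul_eq_mul]
  rw [inv_mul_cancel_left₀ hcard]

theorem sq_ergodicAverage_le (F : Finset G) (u : C(X, ℝ)) (x : X) :
    ergodicAverage F u x ^ 2 ≤ ergodicAverage F (u ^ 2) x := by
  simp only [ergodicAverage_apply, ContinuousMap.pow_apply, inv_mul_eq_div]
  exact sum_div_card_sq_le_sum_sq_div_card

variable (G X) in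
/-- The span of the functions `koopman g w - w`, on which ergodic averages vanish
asymptotically. -/
def coboundaries : Submodule ℝ C(X, ℝ) :=
  Submodule.span ℝ (range fun p : G × C(X, ℝ) => koopman p.1 p.2 - p.2)

theorem koopman_sub_mem_coboundaries (g : G) (u : C(X, ℝ)) :
    koopman g u - u ∈ coboundaries G X :=
  Submodule.subset_span ⟨(g, u), rfl⟩

variable [CompactSpace X]

theorem norm_sum_koopman_le (F : Finset G) (u : C(X, ℝ)) :
    ‖∑ s ∈ F, koopman s u‖ ≤ F.card * ‖u‖ := by
  rw [← nsmul_eq_mul]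
  exact norm_sum_le_of_le F (fun s _ => (ContinuousMap.norm_le _ (norm_nonneg u)).2
    fun x => u.norm_coe_le_norm (s • x)) |>.trans_eq (Finset.sum_const _)

theorem norm_ergodicAverage_koopman_sub_le {F : Finset G} {g : G} {δ : ℝ} (hne : F.Nonempty)
    (hF : FolnerInv G {g} δ F) (u : C(X, ℝ)) :
    ‖ergodicAverage F (koopman g u - u)‖ ≤ 2 * δ * ‖u‖ := by
  classical
  have hcard : (0 : ℝ) < F.card := mod_cast hne.card_pos
  set gF := F.image (g * ·)
  have hgF : ∑ s ∈ F, koopman s (koopman g u) = ∑ t ∈ gF, koopman t u := by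
    rw [Finset.sum_image (mul_right_injective g).injOn]
    simp only [koopman_koopman]
  have hdiff : ((gF \ F).card : ℝ) ≤ δ * F.card := by
    refine le_trans ?_ (hF.card_filter_mul_notMem_le (Finset.mem_singleton_self g))
    rw [← Finset.filter_notMem_eq_sdiff, Finset.filter_image]
    exact mod_cast Finset.card_image_le
  have hdiff' : ((F \ gF).card : ℝ) ≤ δ * F.card := by
    rwa [Finset.card_sdiff_comm (Finset.card_image_of_injective F (mul_right_injective g)).symm]
  have havg : ergodicAverage F (koopman g u - u) = (F.card : ℝ)⁻¹ •
      (∑ t ∈ gF \ F, koopman t u - ∑ t ∈ F \ gF, koopman t u) := by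
    rw [Finset.sum_sdiff_sub_sum_sdiff, ← hgF, map_sub]
    simp only [ergodicAverage, LinearMap.smul_apply, LinearMap.sum_apply, smul_sub]
  rw [havg, norm_smul, norm_inv, Real.norm_natCast, inv_mul_le_iff₀ hcard]
  calc _ ≤ (gF \ F).card * ‖u‖ + (F \ gF).card * ‖u‖ :=
        (norm_sub_le _ _).trans
          (add_le_add (norm_sum_koopman_le _ u) (norm_sum_koopman_le _ u))
    _ ≤ δ * F.card * ‖u‖ + δ * F.card * ‖u‖ := by gcongr
    _ = F.card * (2 * δ * ‖u‖) := by ring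

theorem tendsto_ergodicAverage_of_mem_coboundaries {u : C(X, ℝ)} (hu : u ∈ coboundaries G X) :
    Tendsto (fun F => ergodicAverage F u) (folnerFilter G) (𝓝 0) := by
  induction hu using Submodule.span_induction with
  | mem _ h =>
    obtain ⟨⟨g, w⟩, rfl⟩ := h
    refine NormedAddGroup.tendsto_nhds_zero.2 fun ε hε => ?_
    have hw : 0 < 2 * ‖w‖ + 1 := by positivity
    filter_upwards [eventually_nonempty_and_folnerInv {g} (div_pos hε hw)] with F ⟨hne, hF⟩
    calc ‖ergodicAverage F (koopman g w - w)‖ ≤ 2 * (ε / (2 * ‖w‖ + 1)) * ‖w‖ :=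
          norm_ergodicAverage_koopman_sub_le hne hF w
      _ = ε * (2 * ‖w‖ / (2 * ‖w‖ + 1)) := by ring
      _ < ε * 1 := by gcongr; exact (div_lt_one hw).2 (lt_add_one _)
      _ = ε := mul_one ε
  | zero => simpa only [map_zero] using tendsto_const_nhds
  | add _ _ _ _ h h' => simpa only [map_add, add_zero] using h.add h'
  | smul a _ _ h => simpa only [map_smul, smul_zero] using h.const_smul a

end Averages

section InvariantMeasure

variable {G : Type u} [Group G] {X : Type v} [MeasurableSpace X] [MulAction G X]

theorem ergodicSMul_of_mem_EG [Countable G] [MeasurableConstSMul G X] {μ : ProbabilityMeasure X}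
    (hμ : μ ∈ EG G X) : ErgodicSMul G X (μ : Measure X) := by
  have := mem_MG_iff.1 hμ.1
  refine ⟨fun {s} hs hinv => eventuallyConst_set.2 ?_⟩
  have hall : ∀ᵐ x ∂(μ : Measure X), ∀ g : G, g • x ∈ s ↔ x ∈ s :=
    ae_all_iff.2 fun g => (hinv g).mem_iff
  set A : Set X := ⋂ g : G, (g • ·) ⁻¹' s with hA
  have hAs : ∀ᵐ x ∂(μ : Measure X), x ∈ A ↔ x ∈ s := hall.mono fun x hx => by
    simp only [hA, mem_iInter, mem_preimage, hx, forall_const]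
  have hAm : MeasurableSet A := .iInter fun g => measurable_const_smul g hs
  have hAinv (g : G) : g • A = A := by
    ext x
    simp only [hA, mem_smul_set_iff_inv_smul_mem, mem_iInter, mem_preimage, smul_smul]
    exact (Equiv.mulRight g⁻¹).forall_congr_right (q := fun k => k • x ∈ s)
  rcases hμ.2 A hAm hAinv with h | h
  · right
    have hA0 := measure_eq_zero_iff_ae_notMem.1 ((μ.null_iff_toMeasure_null A).1 h)
    filter_upwards [hAs, hA0] with x hx hxA using fun hxs => hxA (hx.2 hxs)
  · left
    have hA1 : (μ : Measure X) Aᶜ = 0 := (prob_compl_eq_zero_iff hAm).2 <| by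
      rw [← ProbabilityMeasure.ennreal_coeFn_eq_coeFn_toMeasure, h, ENNReal.coe_one]
    filter_upwards [hAs, measure_eq_zero_iff_ae_notMem.1 hA1] with x hx hxA
    exact hx.1 (not_not.1 hxA)

theorem ae_eq_const_of_forall_comp_smul_ae_eq {μ : Measure X} [ErgodicSMul G X μ] {f : X → ℝ}
    (hf : Measurable f) (hinv : ∀ g : G, (fun x => f (g • x)) =ᵐ[μ] f) :
    ∃ c, f =ᵐ[μ] fun _ => c :=
  exists_eventuallyEq_const_of_forall_separating MeasurableSet fun s hs => by
    refine eventuallyConst_set.1 (aeconst_of_forall_preimage_smul_ae_eq G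
      (s := f ⁻¹' s) (hf hs).nullMeasurableSet fun g => ?_)
    filter_upwards [hinv g] with x hx
    exact congrArg (· ∈ s) hx

end InvariantMeasure

section MeanErgodic

open ProbabilityTheory

theorem eq_self_of_mem_orthogonal_of_sub_mem {E : Type*} [NormedAddCommGroup E]
    [InnerProductSpace ℝ E] (U : E →ₗᵢ[ℝ] E) {W : Submodule ℝ E} {v : E} (hv : v ∈ Wᗮ)
    (hUv : U v - v ∈ W) : U v = v := by
  have hpyth := norm_add_sq_real v (U v - v)
  rw [add_sub_cancel, U.norm_map, Submodule.inner_left_of_mem_orthogonal hUv hv] at hpyth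
  exact sub_eq_zero.1 (norm_eq_zero.1 (pow_eq_zero_iff two_ne_zero |>.1 (by linarith)))

variable {G : Type u} [Group G] {X : Type v} [TopologicalSpace X] [CompactSpace X]
  [MeasurableSpace X] [BorelSpace X]

theorem memLp_continuousMap (μ : Measure X) [IsFiniteMeasure μ] (f : C(X, ℝ)) (p : ENNReal) :
    MemLp f p μ :=
  f.continuous.memLp_of_hasCompactSupport (HasCompactSupport.of_compactSpace _)

theorem continuous_variance (f : C(X, ℝ)) :
    Continuous fun μ : ProbabilityMeasure X => Var[f; (μ : Measure X)] := by
  have hvar (μ : ProbabilityMeasure X) := variance_eq_sub (memLp_continuousMap (μ : Measure X) f 2)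
  simp only [hvar]
  exact (ProbabilityMeasure.continuous_integral_continuousMap (f ^ 2)).sub
    ((ProbabilityMeasure.continuous_integral_continuousMap f).pow 2)

theorem variance_le_norm_toLp_sub_sq {μ : Measure X} [IsProbabilityMeasure μ] (f : C(X, ℝ))
    {v : Lp ℝ 2 μ} {c : ℝ} (hv : v =ᵐ[μ] fun _ => c) :
    Var[f; μ] ≤ ‖ContinuousMap.toLp 2 μ ℝ f - v‖ ^ 2 := by
  rw [← variance_sub_const f.continuous.aestronglyMeasurable c, ← real_inner_self_eq_norm_sq,
    L2.inner_def]
  refine (variance_le_expectation_sq (by fun_prop)).trans_eq (integral_congr_ae ?_)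
  filter_upwards [ContinuousMap.coeFn_toLp (p := 2) (𝕜 := ℝ) μ f, hv,
    Lp.coeFn_sub (ContinuousMap.toLp 2 μ ℝ f) v] with x hf hv hsub
  rw [hsub, Pi.sub_apply, hf, hv]
  simp [sq]

variable [MulAction G X] [ContinuousConstSMul G X] (μ : Measure X) [IsProbabilityMeasure μ]

theorem compMeasurePreserving_toLp [SMulInvariantMeasure G X μ] (g : G) (u : C(X, ℝ)) :
    Lp.compMeasurePreserving (g • ·) (measurePreserving_smul g μ) (ContinuousMap.toLp 2 μ ℝ u) =
      ContinuousMap.toLp 2 μ ℝ (koopman g u) :=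
  Lp.ext <| (Lp.coeFn_compMeasurePreserving _ _).trans <|
    ((measurePreserving_smul g μ).quasiMeasurePreserving.ae_eq_comp
      (ContinuousMap.coeFn_toLp (𝕜 := ℝ) μ u)).trans
      (ContinuousMap.coeFn_toLp (𝕜 := ℝ) μ (koopman g u)).symm

theorem exists_mem_coboundaries_variance_sub_lt [ErgodicSMul G X μ] (f : C(X, ℝ)) {ε : ℝ}
    (hε : 0 < ε) : ∃ u ∈ coboundaries G X, Var[f - u; μ] < ε := by
  let T : C(X, ℝ) →L[ℝ] Lp ℝ 2 μ := ContinuousMap.toLp 2 μ ℝ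
  let U (g : G) : Lp ℝ 2 μ →ₗᵢ[ℝ] Lp ℝ 2 μ :=
    Lp.compMeasurePreservingₗᵢ ℝ (g • ·) (measurePreserving_smul g μ)
  have hUT (g : G) (u : C(X, ℝ)) : U g (T u) = T (koopman g u) :=
    compMeasurePreserving_toLp μ g u
  set W := ((coboundaries G X).map T.toLinearMap).topologicalClosure
  have hTW (g : G) (u : C(X, ℝ)) : U g (T u) - T u ∈ W := by
    rw [hUT, ← map_sub]
    exact Submodule.le_topologicalClosure _ ⟨_, koopman_sub_mem_coboundaries g u, rfl⟩
  have hUW (g : G) {w : Lp ℝ 2 μ} (hw : w ∈ W) : U g w - w ∈ W := by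
    have hcont : Continuous fun w => U g w - w := (U g).continuous.sub continuous_id
    refine (closure_minimal ?_ ((Submodule.isClosed_topologicalClosure _).preimage hcont)) hw
    rintro _ ⟨u, -, rfl⟩
    exact hTW g u
  set p := W.starProjection (T f)
  have hp : p ∈ W := W.starProjection_apply_mem _
  have hinv (g : G) : U g (T f - p) = T f - p := by
    refine eq_self_of_mem_orthogonal_of_sub_mem (U g) (W.sub_starProjection_mem_orthogonal _) ?_
    rw [map_sub, sub_sub_sub_comm]
    exact W.sub_mem (hTW g f) (hUW g hp)
  obtain ⟨c, hc⟩ := ae_eq_const_of_forall_comp_smul_ae_eq (G := G)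
    (Lp.stronglyMeasurable (T f - p)).measurable fun g => by
      have h := Lp.coeFn_compMeasurePreserving (T f - p) (measurePreserving_smul g μ)
      have hinv' : Lp.compMeasurePreserving (g • ·) (measurePreserving_smul g μ) (T f - p) =
        T f - p := hinv g
      rw [hinv'] at h
      exact h.symm
  obtain ⟨_, ⟨u, hu, rfl⟩, hpu⟩ := Metric.mem_closure_iff.1 hp (√ε) (Real.sqrt_pos.2 hε)
  refine ⟨u, hu, (variance_le_norm_toLp_sub_sq (f - u) hc).trans_lt ?_⟩
  calc ‖T (f - u) - (T f - p)‖ ^ 2 = ‖p - T u‖ ^ 2 := by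
        rw [map_sub, sub_sub_sub_cancel_left]
    _ < √ε ^ 2 := by
        gcongr
        rwa [dist_eq_norm] at hpu
    _ = ε := Real.sq_sqrt hε.le

variable [SMulInvariantMeasure G X μ]

theorem integral_ergodicAverage {F : Finset G} (hF : F.Nonempty) (u : C(X, ℝ)) :
    ∫ x, ergodicAverage F u x ∂μ = ∫ x, u x ∂μ := by
  have hcard : (F.card : ℝ) ≠ 0 := mod_cast hF.card_ne_zero
  simp only [ergodicAverage_apply]
  rw [integral_const_mul, integral_finsetSum (f := fun s x => u (s • x)) F fun s _ =>
    integrable_continuousMap μ (koopman s u)]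
  simp only [integral_smul_eq_self (fun x => u x), Finset.sum_const, nsmul_eq_mul]
  rw [inv_mul_cancel_left₀ hcard]

theorem integral_eq_zero_of_mem_coboundaries {u : C(X, ℝ)} (hu : u ∈ coboundaries G X) :
    ∫ x, u x ∂μ = 0 := by
  induction hu using Submodule.span_induction with
  | mem _ h =>
    obtain ⟨⟨g, w⟩, rfl⟩ := h
    simp only [ContinuousMap.sub_apply]
    rw [integral_sub (integrable_continuousMap μ _) (integrable_continuousMap μ w), sub_eq_zero]
    exact integral_smul_eq_self (fun x => w x)
  | zero => exact integral_zero X ℝ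
  | add u v _ _ h h' =>
    simp only [ContinuousMap.add_apply]
    rw [integral_add (integrable_continuousMap μ u) (integrable_continuousMap μ v), h, h',
      add_zero]
  | smul a u _ h =>
    simp only [ContinuousMap.smul_apply]
    rw [integral_smul, h, smul_zero]

theorem variance_ergodicAverage_le {F : Finset G} (hF : F.Nonempty) (f : C(X, ℝ)) :
    Var[ergodicAverage F f; μ] ≤ Var[f; μ] := by
  set c := ∫ x, f x ∂μ with hc
  have hsub : ergodicAverage F (f - .const X c) = ergodicAverage F f - .const X c := by
    rw [map_sub, ergodicAverage_const hF]
  rw [variance_eq_integral (ergodicAverage F f).continuous.aemeasurable,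
    variance_eq_integral f.continuous.aemeasurable, integral_ergodicAverage μ hF, ← hc]
  calc ∫ x, (ergodicAverage F f x - c) ^ 2 ∂μ
      = ∫ x, ergodicAverage F (f - .const X c) x ^ 2 ∂μ := by rw [hsub]; rfl
    _ ≤ ∫ x, ergodicAverage F ((f - .const X c) ^ 2) x ∂μ :=
        integral_mono (integrable_continuousMap μ (ergodicAverage F (f - .const X c) ^ 2))
          (integrable_continuousMap μ _) (sq_ergodicAverage_le F _)
    _ = ∫ x, (f x - c) ^ 2 ∂μ := integral_ergodicAverage μ hF _

theorem measureReal_le_abs_ergodicAverage_sub_integral_le {F : Finset G} (hF : F.Nonempty)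
    (f : C(X, ℝ)) {u : C(X, ℝ)} (hu : u ∈ coboundaries G X) {r : ℝ} (hr : 0 < r)
    (hFu : ‖ergodicAverage F u‖ ≤ r / 2) :
    μ.real {x | r ≤ |ergodicAverage F f x - ∫ y, f y ∂μ|} ≤ Var[f - u; μ] / (r / 2) ^ 2 := by
  set v := ergodicAverage F (f - u) with hv
  have hmean : ∫ x, v x ∂μ = ∫ x, f x ∂μ := by
    rw [integral_ergodicAverage μ hF]
    simp only [ContinuousMap.sub_apply]
    rw [integral_sub (integrable_continuousMap μ f) (integrable_continuousMap μ u),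
      integral_eq_zero_of_mem_coboundaries μ hu, sub_zero]
  have hsubset : {x | r ≤ |ergodicAverage F f x - ∫ y, f y ∂μ|} ⊆
      {x | r / 2 ≤ |v x - ∫ y, v y ∂μ|} := fun x hx => by
    have hux := (ergodicAverage F u).norm_coe_le_norm x
    have hfx : ergodicAverage F f x - ∫ y, f y ∂μ =
        ergodicAverage F u x + (v x - ∫ y, v y ∂μ) := by
      rw [hmean, hv, map_sub, ContinuousMap.sub_apply]
      ring
    have htri := abs_add_le (ergodicAverage F u x) (v x - ∫ y, v y ∂μ)
    rw [← hfx] at htri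
    rw [Real.norm_eq_abs] at hux
    have : r ≤ |ergodicAverage F f x - ∫ y, f y ∂μ| := hx
    change r / 2 ≤ |v x - ∫ y, v y ∂μ|
    linarith
  have hcheb := ENNReal.toReal_mono ENNReal.ofReal_ne_top
    (meas_ge_le_variance_div_sq (memLp_continuousMap μ v 2) (half_pos hr))
  rw [ENNReal.toReal_ofReal (by positivity [variance_nonneg v μ])] at hcheb
  calc _ ≤ μ.real {x | r / 2 ≤ |v x - ∫ y, v y ∂μ|} := measureReal_mono hsubset
    _ ≤ Var[v; μ] / (r / 2) ^ 2 := hcheb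
    _ ≤ Var[f - u; μ] / (r / 2) ^ 2 := by
        gcongr
        exact variance_ergodicAverage_le μ hF (f - u)

end MeanErgodic

section UniformErgodic

open ProbabilityTheory

variable {G : Type u} [Group G] [Countable G] {X : Type v} [TopologicalSpace X] [CompactSpace X]
  [MeasurableSpace X] [BorelSpace X] [MulAction G X] [ContinuousConstSMul G X]

theorem eventually_prod_measureReal_le_abs_ergodicAverage_sub_integral_le
    {μ : ProbabilityMeasure X} (hμ : μ ∈ EG G X) (f : C(X, ℝ)) {r η : ℝ} (hr : 0 < r)
    (hη : 0 < η) :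
    ∀ᶠ p : Finset G × ProbabilityMeasure X in folnerFilter G ×ˢ 𝓝 μ, p.2 ∈ MG G X →
      (p.2 : Measure X).real {x | r ≤ |ergodicAverage p.1 f x - ∫ y, f y ∂p.2|} ≤ η := by
  have := ergodicSMul_of_mem_EG hμ
  obtain ⟨u, hu, hvar⟩ := exists_mem_coboundaries_variance_sub_lt (G := G) (μ : Measure X) f
    (ε := η * (r / 2) ^ 2) (by positivity)
  have hF : ∀ᶠ F in folnerFilter G, F.Nonempty ∧ ‖ergodicAverage F u‖ ≤ r / 2 :=
    (eventually_nonempty G).and <| (NormedAddGroup.tendsto_nhds_zero.1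
      (tendsto_ergodicAverage_of_mem_coboundaries hu) _ (half_pos hr)).mono fun _ => le_of_lt
  have hν : ∀ᶠ ν : ProbabilityMeasure X in 𝓝 μ, Var[f - u; (ν : Measure X)] < η * (r / 2) ^ 2 :=
    (continuous_variance (f - u)).continuousAt.eventually_lt_const hvar
  filter_upwards [hF.prod_mk hν] with ⟨F, ν⟩ ⟨⟨hne, hFu⟩, hvar⟩ hinv
  have := mem_MG_iff.1 hinv
  exact (measureReal_le_abs_ergodicAverage_sub_integral_le _ hne f hu hr hFu).trans
    ((div_le_iff₀ (by positivity)).2 hvar.le)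

theorem eventually_forall_mem_EG_measureReal_le_abs_ergodicAverage_sub_integral_le
    (hcpt : IsCompact (EG G X)) (f : C(X, ℝ)) {r η : ℝ} (hr : 0 < r) (hη : 0 < η) :
    ∀ᶠ F in folnerFilter G, ∀ μ ∈ EG G X,
      (μ : Measure X).real {x | r ≤ |ergodicAverage F f x - ∫ y, f y ∂μ|} ≤ η := by
  have h := hcpt.mem_prod_nhdsSet_of_forall fun μ hμ =>
    eventually_prod_measureReal_le_abs_ergodicAverage_sub_integral_le hμ f hr hη
  filter_upwards [Eventually.curry h] with F hF μ hμ
  exact hF.self_of_nhdsSet μ hμ hμ.1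

end UniformErgodic

/-! ### Separating compact sets of ergodic measures -/

section Separation

theorem exists_finset_forall_one_lt_dist_integral {X : Type v} [TopologicalSpace X]
    [CompactSpace X] [MeasurableSpace X] [BorelSpace X] [HasOuterApproxClosed X]
    {Z : Set (ProbabilityMeasure X × ProbabilityMeasure X)} (hZ : IsCompact Z)
    (hne : ∀ p ∈ Z, p.1 ≠ p.2) :
    ∃ H : Finset C(X, ℝ), ∀ p ∈ Z, ∃ h ∈ H, 1 < dist (∫ x, h x ∂p.1) (∫ x, h x ∂p.2) := by
  let U (h : C(X, ℝ)) : Set (ProbabilityMeasure X × ProbabilityMeasure X) :=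
    {p | 1 < dist (∫ x, h x ∂p.1) (∫ x, h x ∂p.2)}
  have hU (h : C(X, ℝ)) : IsOpen (U h) :=
    have hcont := ProbabilityMeasure.continuous_integral_continuousMap h
    isOpen_lt continuous_const ((hcont.comp continuous_fst).dist (hcont.comp continuous_snd))
  have hcover : Z ⊆ ⋃ h, U h := fun p hp => by
    obtain ⟨f, hf⟩ := Function.ne_iff.1 (integrals_injective.ne (hne p hp))
    have hd : 0 < dist (∫ x, f x ∂p.1) (∫ x, f x ∂p.2) := dist_pos.2 hf
    set c := 2 / dist (∫ x, f x ∂p.1) (∫ x, f x ∂p.2)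
    refine mem_iUnion.2 ⟨c • f, ?_⟩
    change 1 < dist (∫ x, c • f x ∂p.1) (∫ x, c • f x ∂p.2)
    rw [integral_smul, integral_smul, dist_smul₀, Real.norm_of_nonneg (by positivity),
      div_mul_cancel₀ _ hd.ne']
    exact one_lt_two
  obtain ⟨H, hH⟩ := hZ.elim_finite_subcover U hU hcover
  refine ⟨H, fun p hp => ?_⟩
  obtain ⟨h, hh, hp⟩ := mem_iUnion₂.1 (hH hp)
  exact ⟨h, hh, hp⟩

theorem disjoint_closure_thickening {E : Type*} [PseudoMetricSpace E] {s t : Set E} {r : ℝ}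
    (hr : 0 < r) (hst : ∀ x ∈ s, ∀ y ∈ t, 4 * r ≤ dist x y) :
    Disjoint (closure (Metric.thickening r s)) (closure (Metric.thickening r t)) := by
  have hsub (u : Set E) : closure (Metric.thickening r u) ⊆ Metric.thickening (2 * r) u :=
    (Metric.closure_thickening_subset_cthickening r u).trans
      (Metric.cthickening_subset_thickening' (by positivity) (by linarith) u)
  refine disjoint_left.2 fun z hzs hzt => ?_
  obtain ⟨x, hx, hzx⟩ := Metric.mem_thickening_iff.1 (hsub s hzs)
  obtain ⟨y, hy, hzy⟩ := Metric.mem_thickening_iff.1 (hsub t hzt)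
  linarith [hst x hx y hy, dist_triangle_left x y z]

variable {G : Type u} [Group G] [Countable G] [(folnerFilter G).NeBot] {X : Type v}
  [TopologicalSpace X] [CompactSpace X] [MeasurableSpace X] [BorelSpace X] [MulAction G X]
  [ContinuousConstSMul G X]

theorem exists_finset_forall_mem_EG_measureReal_le_dist_le (hcpt : IsCompact (EG G X))
    (H : Finset C(X, ℝ)) {r η : ℝ} (hr : 0 < r) (hη : 0 < η) :
    ∃ F : Finset G, ∀ μ ∈ EG G X, (μ : Measure X).real
      {x | r ≤ dist (fun h : H => ergodicAverage F h.1 x) (fun h => ∫ y, h.1 y ∂μ)} ≤ η := by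
  have hη' : 0 < η / (H.card + 1) := by positivity
  obtain ⟨F, hF⟩ := ((Filter.eventually_all_finset H).2 fun h _ =>
    eventually_forall_mem_EG_measureReal_le_abs_ergodicAverage_sub_integral_le hcpt h
      hr hη').exists
  refine ⟨F, fun μ hμ => ?_⟩
  have hsub : {x | r ≤ dist (fun h : H => ergodicAverage F h.1 x) (fun h => ∫ y, h.1 y ∂μ)} ⊆
      ⋃ h ∈ H, {x | r ≤ |ergodicAverage F h x - ∫ y, h y ∂μ|} := fun x hx => by
    have hx' := not_lt.2 (show r ≤ _ from hx)
    rw [dist_pi_lt_iff hr, not_forall] at hx'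
    obtain ⟨h, hh⟩ := hx'
    exact mem_biUnion h.2 (not_lt.1 hh)
  calc _ ≤ ∑ h ∈ H, (μ : Measure X).real {x | r ≤ |ergodicAverage F h x - ∫ y, h y ∂μ|} :=
        (measureReal_mono hsub (measure_ne_top _ _)).trans (measureReal_biUnion_finset_le _ _)
    _ ≤ H.card • (η / (H.card + 1)) := Finset.sum_le_card_nsmul _ _ _ fun h hh => hF h hh μ hμ
    _ ≤ η := by
        rw [nsmul_eq_mul, mul_div_assoc', div_le_iff₀ (by positivity)]
        linarith

theorem exists_isOpen_disjoint_closure_measureReal_compl_le [HasOuterApproxClosed X]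
    (hcpt : IsCompact (EG G X)) {κ ρ : Type*} [Finite κ] {C : κ → Set (ProbabilityMeasure X)}
    {col : κ → ρ} (hC : ∀ a, IsCompact (C a)) (hCE : ∀ a, C a ⊆ EG G X)
    (hdisj : ∀ a b, a ≠ b → col a = col b → Disjoint (C a) (C b)) {η : ℝ} (hη : 0 < η) :
    ∃ A : κ → Set X, (∀ a, IsOpen (A a)) ∧
      (∀ a b, a ≠ b → col a = col b → Disjoint (closure (A a)) (closure (A b))) ∧
      ∀ a, ∀ μ ∈ C a, (μ : Measure X).real (A a)ᶜ ≤ η := by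
  let Z := ⋃ (a) (b) (_ : a ≠ b ∧ col a = col b), C a ×ˢ C b
  have hZ : IsCompact Z := isCompact_iUnion fun a => isCompact_iUnion fun b =>
    isCompact_iUnion fun _ => (hC a).prod (hC b)
  have hZne : ∀ p ∈ Z, p.1 ≠ p.2 := fun p hp => by
    simp only [Z, mem_iUnion] at hp
    obtain ⟨a, b, ⟨hab, hcol⟩, hpa, hpb⟩ := hp
    exact (hdisj a b hab hcol).ne_of_mem hpa hpb
  obtain ⟨H, hH⟩ := exists_finset_forall_one_lt_dist_integral hZ hZne
  obtain ⟨F, hF⟩ := exists_finset_forall_mem_EG_measureReal_le_dist_le hcpt H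
    (r := 1 / 4) (by norm_num) hη
  let Φ (x : X) (h : H) : ℝ := ergodicAverage F h.1 x
  let Ψ (μ : ProbabilityMeasure X) (h : H) : ℝ := ∫ x, h.1 x ∂μ
  have hΦ : Continuous Φ := continuous_pi fun h => (ergodicAverage F h.1).continuous
  refine ⟨fun a => Φ ⁻¹' Metric.thickening (1 / 4) (Ψ '' C a),
    fun a => Metric.isOpen_thickening.preimage hΦ, fun a b hab hcol => ?_, fun a μ hμ => ?_⟩
  · refine ((disjoint_closure_thickening (by norm_num) ?_).preimage Φ).mono
      (hΦ.closure_preimage_subset _) (hΦ.closure_preimage_subset _)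
    rintro _ ⟨μ, hμ, rfl⟩ _ ⟨ν, hν, rfl⟩
    obtain ⟨h, hh, hdist⟩ := hH (μ, ν) (by
      simp only [Z, mem_iUnion]
      exact ⟨a, b, ⟨hab, hcol⟩, hμ, hν⟩)
    have : dist (Ψ μ ⟨h, hh⟩) (Ψ ν ⟨h, hh⟩) ≤ dist (Ψ μ) (Ψ ν) := dist_le_pi_dist _ _ _
    change 1 < dist (Ψ μ ⟨h, hh⟩) (Ψ ν ⟨h, hh⟩) at hdist
    linarith
  · refine (measureReal_mono fun x hx => ?_).trans (hF μ (hCE a hμ))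
    exact not_lt.1 fun hlt => hx (Metric.mem_thickening_iff.2 ⟨Ψ μ, mem_image_of_mem Ψ hμ, hlt⟩)

end Separation

/-! ### Coloured closed refinements in spaces of finite covering dimension -/

section Coloring

variable {Y : Type*} {ι : Type*}

/-- The points at which the functions `φ j`, `j ∈ σ`, are positive and exceed all the others.
For index sets of equal size these sets are pairwise disjoint. -/
def dominanceSet (φ : ι → Y → ℝ) (σ : Finset ι) : Set Y :=
  {y | ∀ j ∈ σ, 0 < φ j y ∧ ∀ l ∉ σ, φ l y < φ j y}

theorem isOpen_dominanceSet [TopologicalSpace Y] [Finite ι] {φ : ι → Y → ℝ}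
    (hφ : ∀ j, Continuous (φ j)) (σ : Finset ι) : IsOpen (dominanceSet φ σ) := by
  have h : dominanceSet φ σ =
      ⋂ j ∈ σ, ({y | 0 < φ j y} ∩ ⋂ (l) (_ : l ∉ σ), {y | φ l y < φ j y}) := by
    ext y
    simp only [dominanceSet, mem_iInter, mem_inter_iff, mem_ofPred_eq]
  rw [h]
  exact isOpen_biInter_finset fun j _ => (isOpen_lt continuous_const (hφ j)).inter <|
    isOpen_iInter_of_finite fun l => isOpen_iInter_of_finite fun _ => isOpen_lt (hφ l) (hφ j)

theorem disjoint_dominanceSet (φ : ι → Y → ℝ) {σ τ : Finset ι} (hne : σ ≠ τ)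
    (hcard : σ.card = τ.card) : Disjoint (dominanceSet φ σ) (dominanceSet φ τ) := by
  have hστ : ¬ σ ⊆ τ := fun h => hne (Finset.eq_of_subset_of_card_le h hcard.ge)
  have hτσ : ¬ τ ⊆ σ := fun h => hne (Finset.eq_of_subset_of_card_le h hcard.le).symm
  obtain ⟨j, hjσ, hjτ⟩ := Finset.not_subset.1 hστ
  obtain ⟨l, hlτ, hlσ⟩ := Finset.not_subset.1 hτσ
  exact disjoint_left.2 fun y hyσ hyτ =>
    ((hyσ j hjσ).2 l hlσ).asymm ((hyτ l hlτ).2 j hjτ)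

theorem mem_dominanceSet_filter_pos [Fintype ι] {φ : ι → Y → ℝ} (y : Y) :
    y ∈ dominanceSet φ (Finset.univ.filter fun j => 0 < φ j y) := fun j hj => by
  have hpos : 0 < φ j y := (Finset.mem_filter.1 hj).2
  refine ⟨hpos, fun l hl => (not_lt.1 fun h => hl ?_).trans_lt hpos⟩
  exact Finset.mem_filter.2 ⟨Finset.mem_univ l, h⟩

theorem exists_continuousMap_pos_subset [TopologicalSpace Y] [NormalSpace Y] [Finite ι]
    {W : ι → Set Y} (hW : ∀ j, IsOpen (W j)) (hcov : ⋃ j, W j = univ) :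
    ∃ φ : ι → C(Y, ℝ), (∀ j y, 0 < φ j y → y ∈ W j) ∧ ∀ y, ∃ j, 0 < φ j y := by
  obtain ⟨D, hDcov, hD, hDW⟩ := exists_iUnion_eq_closed_subset hW (fun _ => toFinite _) hcov
  choose φ hφ₀ hφ₁ _ using fun j => exists_continuous_zero_one_of_isClosed
    (hW j).isClosed_compl (hD j) (disjoint_compl_left_iff_subset.2 (hDW j))
  refine ⟨φ, fun j y hy => by_contra fun hyW => hy.ne' (hφ₀ j hyW), fun y => ?_⟩
  obtain ⟨j, hj⟩ := mem_iUnion.1 (hDcov.symm ▸ mem_univ y)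
  exact ⟨j, by rw [hφ₁ j hj]; exact one_pos⟩

theorem CovDimLE.exists_isClosed_coloring [TopologicalSpace Y] [NormalSpace Y] {m : ℕ}
    (hdim : CovDimLE Y m) {n : ℕ} {U : Fin n → Set Y} (hU : ∀ i, IsOpen (U i))
    (hcov : ⋃ i, U i = univ) :
    ∃ (κ : Type) (_ : Fintype κ) (C : κ → Set Y) (col : κ → Fin (m + 1)),
      (∀ a, IsClosed (C a)) ∧ ⋃ a, C a = univ ∧ (∀ a, ∃ i, C a ⊆ U i) ∧
      ∀ a b, a ≠ b → col a = col b → Disjoint (C a) (C b) := by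
  obtain ⟨k, W, hW, hWcov, hWU, hWcard⟩ := hdim n U hU hcov
  obtain ⟨φ, hφW, hφpos⟩ := exists_continuousMap_pos_subset hW hWcov
  let κ : Type := {σ : Finset (Fin k) // 0 < σ.card ∧ σ.card ≤ m + 1}
  let O (σ : κ) : Set Y := dominanceSet (fun j y => φ j y) σ.1
  have hO (σ : κ) : IsOpen (O σ) := isOpen_dominanceSet (fun j => (φ j).continuous) σ.1
  have hOcov : ⋃ σ, O σ = univ := eq_univ_of_forall fun y => by
    refine mem_iUnion.2 ⟨⟨Finset.univ.filter fun j => 0 < φ j y, ?_, ?_⟩,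
      mem_dominanceSet_filter_pos y⟩
    · obtain ⟨j, hj⟩ := hφpos y
      exact Finset.card_pos.2 ⟨j, Finset.mem_filter.2 ⟨Finset.mem_univ j, hj⟩⟩
    · rw [← ncard_coe_finset]
      exact (ncard_le_ncard fun j hj => hφW j y (Finset.mem_filter.1 hj).2).trans (hWcard y)
  obtain ⟨C, hCcov, hC, hCO⟩ := exists_iUnion_eq_closed_subset hO (fun _ => toFinite _) hOcov
  refine ⟨κ, inferInstance, C, fun σ => ⟨σ.1.card - 1, by have := σ.2; omega⟩, hC, hCcov,
    fun σ => ?_, fun σ τ hne hcol => ?_⟩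
  · obtain ⟨j, hj⟩ := Finset.card_pos.1 σ.2.1
    obtain ⟨i, hi⟩ := hWU j
    exact ⟨i, fun y hy => hi (hφW j y (hCO σ hy j hj).1)⟩
  · have hcard : σ.1.card = τ.1.card := by
      have := σ.2
      have := τ.2
      have := Fin.mk.inj hcol
      omega
    exact (disjoint_dominanceSet _ (Subtype.coe_injective.ne hne) hcard).mono (hCO σ) (hCO τ)

theorem CovDimLE.exists_isClosed_coloring_of_compactSpace [TopologicalSpace Y] [CompactSpace Y]
    [NormalSpace Y] {m : ℕ} (hdim : CovDimLE Y m) {U : ι → Set Y} (hU : ∀ i, IsOpen (U i))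
    (hcov : ⋃ i, U i = univ) :
    ∃ (κ : Type) (_ : Fintype κ) (C : κ → Set Y) (col : κ → Fin (m + 1)),
      (∀ a, IsClosed (C a)) ∧ ⋃ a, C a = univ ∧ (∀ a, ∃ i, C a ⊆ U i) ∧
      ∀ a b, a ≠ b → col a = col b → Disjoint (C a) (C b) := by
  obtain ⟨t, ht⟩ := isCompact_univ.elim_finite_subcover U hU hcov.ge
  have htcov : ⋃ i, U (t.equivFin.symm i) = univ := by
    rw [t.equivFin.symm.surjective.iUnion_comp (fun i : t => U i), iUnion_subtype]
    exact univ_subset_iff.1 ht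
  obtain ⟨κ, hκ, C, col, hC, hCcov, hCU, hdisj⟩ :=
    hdim.exists_isClosed_coloring (fun i => hU (t.equivFin.symm i)) htcov
  exact ⟨κ, hκ, C, col, hC, hCcov, fun a => (hCU a).imp' _ fun _ h => h, hdisj⟩

end Coloring

/-! ### Assembling the coloured castles -/

namespace TowerFamily

section Restrict

variable {G : Type u} {X : Type v} [Group G] [MulAction G X] {T : TowerFamily G X}

/-- The towers cut down to the base points whose orbit through the tower stays in `A`, so that
the restricted family is supported in `A`. -/
def restrict (T : TowerFamily G X) (A : Set X) : TowerFamily G X :=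
  T.withBase fun i => T.base i ∩ ⋂ s ∈ T.shape i, (s • ·) ⁻¹' A

theorem measureReal_support_le_restrict_add [MeasurableSpace X]
    (T : TowerFamily G X) (A : Set X) (μ : Measure X) [IsFiniteMeasure μ]
    [SMulInvariantMeasure G X μ] :
    μ.real T.support ≤
      μ.real (T.restrict A).support + (∑ i, ((T.shape i).card : ℝ) ^ 2) * μ.real Aᶜ := by
  have hsub : T.support ⊆ (T.restrict A).support ∪
      ⋃ i, ⋃ p ∈ T.shape i ×ˢ T.shape i, (p.1 * p.2⁻¹) • Aᶜ := fun z hz => by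
    obtain ⟨i, s, hs, x, hx, rfl⟩ := mem_support.1 hz
    by_cases h : ∀ t ∈ T.shape i, t • x ∈ A
    · exact .inl (mem_support.2 ⟨i, s, hs, x, ⟨hx, mem_iInter₂.2 h⟩, rfl⟩)
    · push Not at h
      obtain ⟨t, ht, hxt⟩ := h
      refine .inr (mem_iUnion.2 ⟨i, mem_biUnion (Finset.mk_mem_product hs ht) ?_⟩)
      exact ⟨t • x, hxt, by simp only [smul_smul, inv_mul_cancel_right]⟩
  refine (measureReal_mono hsub).trans <| (measureReal_union_le _ _).trans ?_
  gcongr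
  calc _ ≤ ∑ i, ∑ p ∈ T.shape i ×ˢ T.shape i, μ.real ((p.1 * p.2⁻¹) • Aᶜ) :=
        (measureReal_iUnion_fintype_le _).trans <|
          Finset.sum_le_sum fun i _ => measureReal_biUnion_finset_le _ _
    _ = _ := by
        simp only [measureReal_smul, Finset.sum_const, Finset.card_product, nsmul_eq_mul,
          Finset.sum_mul, Nat.cast_mul, sq]

variable [TopologicalSpace X] [ContinuousConstSMul G X]

theorem support_closure_restrict_subset (T : TowerFamily G X) (A : Set X) :
    ((T.restrict A).withBase fun i => closure ((T.restrict A).base i)).support ⊆ closure A := by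
  intro z hz
  obtain ⟨i, s, hs, x, hx, rfl⟩ := mem_support.1 hz
  exact map_mem_closure (continuous_const_smul s) hx fun y hy => mem_iInter₂.1 hy.2 s hs

end Restrict

section Subshape

variable {G : Type u} {X : Type v} [Group G] [MulAction G X] {T : TowerFamily G X}

theorem IsCastle.withShape (hT : T.IsCastle) {S : T.ι → Finset G} (hS : ∀ i, S i ⊆ T.shape i) :
    (T.withShape S).IsCastle :=
  fun i j s hs t ht => hT i j s (hS i hs) t (hS j ht)

theorem IsCastle.measureReal_support_le_withShape [MeasurableSpace X] [MeasurableConstSMul G X]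
    (hT : T.IsCastle) (hm : ∀ i, MeasurableSet (T.base i)) {S : T.ι → Finset G}
    (hS : ∀ i, S i ⊆ T.shape i) {c : ℕ} (hc : ∀ i, (T.shape i).card ≤ c * (S i).card)
    (μ : Measure X) [IsFiniteMeasure μ] [SMulInvariantMeasure G X μ] :
    μ.real T.support ≤ c * μ.real (T.withShape S).support := by
  rw [hT.measureReal_support hm, (hT.withShape hS).measureReal_support hm, Finset.mul_sum]
  refine Finset.sum_le_sum fun i _ => ?_
  rw [← mul_assoc]
  exact mul_le_mul_of_nonneg_right (mod_cast hc i) measureReal_nonneg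

end Subshape

section OpenCastle

variable {G : Type u} {X : Type v} [Group G] [MetricSpace X] [MulAction G X] {K : Finset G}
  {δ : ℝ} {N : ℕ}

theorem IsOpenCastle.isCastle {T : TowerFamily G X} (hT : T.IsOpenCastle K δ N) : T.IsCastle :=
  hT.isCastle_closure.withBase fun _ => subset_closure

theorem IsOpenCastle.restrict [CompactSpace X] [ContinuousConstSMul G X] {T : TowerFamily G X}
    (hT : T.IsOpenCastle K δ N) {A : Set X} (hA : IsOpen A) :
    (T.restrict A).IsOpenCastle K δ N where
  isOpen_base i := (hT.isOpen_base i).inter <|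
    isOpen_biInter_finset fun s _ => hA.preimage (continuous_const_smul s)
  isCastle_closure := hT.isCastle_closure.withBase fun _ => closure_mono inter_subset_left
  folnerInv := hT.folnerInv
  le_card := hT.le_card
  diam_lt i s hs :=
    (diam_smul_mono s (closure_mono inter_subset_left)).trans_lt (hT.diam_lt i s hs)

theorem IsOpenCastle.sigma {κ : Type} [Fintype κ] {T : κ → TowerFamily G X}
    (hT : ∀ k, (T k).IsOpenCastle K δ N)
    (hd : Pairwise fun k l => Disjoint ((T k).withBase fun i => closure ((T k).base i)).support
      ((T l).withBase fun i => closure ((T l).base i)).support) :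
    (sigma T).IsOpenCastle K δ N where
  isOpen_base a := (hT a.1).isOpen_base a.2
  isCastle_closure := IsCastle.sigma (fun k => (hT k).isCastle_closure) hd
  folnerInv a := (hT a.1).folnerInv a.2
  le_card a := (hT a.1).le_card a.2
  diam_lt a := (hT a.1).diam_lt a.2

end OpenCastle

section Coloring

variable {G : Type u} {X : Type v} [Group G] [(folnerFilter G).NeBot] [MetricSpace X]
  [CompactSpace X] [MeasurableSpace X] [BorelSpace X] [MulAction G X] [ContinuousConstSMul G X]
  {m : ℕ}

theorem exists_compact_coloring_isOpenCastle [Infinite G] (hfree : FreeAction G X)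
    (hcpt : IsCompact (EG G X)) (hdim : CovDimLE (EG G X) m) (K : Finset G)
    {δ : ℝ} (hδ : 0 < δ) (N : ℕ) {ε : ℝ} (hε : 0 < ε) :
    ∃ (κ : Type) (_ : Fintype κ) (C : κ → Set (ProbabilityMeasure X)) (col : κ → Fin (m + 1))
      (T : κ → TowerFamily G X), (∀ a, IsCompact (C a)) ∧ ⋃ a, C a = EG G X ∧
      (∀ a b, a ≠ b → col a = col b → Disjoint (C a) (C b)) ∧
      (∀ a, (T a).IsOpenCastle K δ N) ∧
      ∀ a, ∀ μ ∈ C a, 1 - ε < (μ : Measure X).real (T a).support := by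
  have := isCompact_iff_compactSpace.1 hcpt
  choose T hT hTμ using fun y : EG G X =>
    have := mem_MG_iff.1 y.2.1
    exists_isOpenCastle hfree K hδ N hε (y : Measure X)
  let U (y : EG G X) : Set (EG G X) := {ν | 1 - ε < (ν.1 : Measure X).real (T y).support}
  have hU (y : EG G X) : IsOpen (U y) :=
    ((lowerSemicontinuous_measureReal (isOpen_support (hT y).isOpen_base)).isOpen_preimage
      (1 - ε)).preimage continuous_subtype_val
  obtain ⟨κ, hκ, C, col, hC, hCcov, hCU, hdisj⟩ :=
    hdim.exists_isClosed_coloring_of_compactSpace hU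
      (eq_univ_of_forall fun y => mem_iUnion.2 ⟨y, hTμ y⟩)
  choose y hy using hCU
  refine ⟨κ, hκ, fun a => Subtype.val '' C a, col, fun a => T (y a),
    fun a => (hC a).isCompact.image continuous_subtype_val, ?_,
    fun a b hab hcol => (disjoint_image_iff Subtype.val_injective).2 (hdisj a b hab hcol),
    fun a => hT (y a), ?_⟩
  · rw [← image_iUnion, hCcov, image_univ, Subtype.range_val]
  · rintro a _ ⟨ν, hν, rfl⟩
    exact hy a hν

theorem exists_isOpen_disjoint_closure_measureReal_support_restrict_ge
    [Countable G] (hcpt : IsCompact (EG G X)) {κ ρ : Type*} [Finite κ]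
    {C : κ → Set (ProbabilityMeasure X)} {col : κ → ρ} (hC : ∀ a, IsCompact (C a))
    (hCE : ∀ a, C a ⊆ EG G X) (hdisj : ∀ a b, a ≠ b → col a = col b → Disjoint (C a) (C b))
    (T : κ → TowerFamily G X) {ε : ℝ} (hε : 0 < ε) :
    ∃ A : κ → Set X, (∀ a, IsOpen (A a)) ∧
      (∀ a b, a ≠ b → col a = col b → Disjoint (closure (A a)) (closure (A b))) ∧
      ∀ a, ∀ μ ∈ C a, (μ : Measure X).real (T a).support - ε ≤
        (μ : Measure X).real ((T a).restrict (A a)).support := by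
  have := Fintype.ofFinite κ
  let M (a : κ) : ℝ := ∑ i, (((T a).shape i).card : ℝ) ^ 2
  have hM (a : κ) : 0 ≤ M a := Finset.sum_nonneg fun i _ => sq_nonneg _
  obtain ⟨η, hη, hηM⟩ := exists_pos_mul_lt hε (∑ a, M a)
  obtain ⟨A, hA, hAdisj, hAμ⟩ :=
    exists_isOpen_disjoint_closure_measureReal_compl_le hcpt hC hCE hdisj hη
  refine ⟨A, hA, hAdisj, fun a μ hμ => ?_⟩
  have := mem_MG_iff.1 (hCE a hμ).1
  have hloss : M a * (μ : Measure X).real (A a)ᶜ ≤ ε :=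
    calc M a * (μ : Measure X).real (A a)ᶜ ≤ M a * η :=
          mul_le_mul_of_nonneg_left (hAμ a μ hμ) (hM a)
      _ ≤ (∑ a, M a) * η := mul_le_mul_of_nonneg_right
          (Finset.single_le_sum (fun b _ => hM b) (Finset.mem_univ a)) hη.le
      _ ≤ ε := hηM.le
  linarith [(T a).measureReal_support_le_restrict_add (A a) (μ : Measure X)]

theorem exists_isOpenCastle_family_measureReal_compl_le [Countable G] [Infinite G]
    (hfree : FreeAction G X) (hcpt : IsCompact (EG G X)) (hdim : CovDimLE (EG G X) m)
    (K : Finset G) {δ : ℝ} (hδ : 0 < δ) (N : ℕ) {ε : ℝ} (hε : 0 < ε) :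
    ∃ D : Fin (m + 1) → TowerFamily G X, (∀ b, (D b).IsOpenCastle K δ N) ∧
      ∀ μ ∈ MG G X, (μ : Measure X).real (⋃ b, (D b).support)ᶜ ≤ ε := by
  classical
  obtain ⟨κ, _, C, col, T, hC, hCE, hCdisj, hT, hTμ⟩ :=
    exists_compact_coloring_isOpenCastle hfree hcpt hdim K hδ N (half_pos hε)
  obtain ⟨A, hA, hAdisj, hAμ⟩ := exists_isOpen_disjoint_closure_measureReal_support_restrict_ge
    hcpt hC (fun a => hCE ▸ subset_iUnion C a) hCdisj T (half_pos hε)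
  let D (b : Fin (m + 1)) : TowerFamily G X :=
    sigma fun a : {a // col a = b} => (T a).restrict (A a)
  have hD (b) : (D b).IsOpenCastle K δ N :=
    IsOpenCastle.sigma (fun a => (hT a).restrict (hA a)) fun a a' haa' =>
      (hAdisj a a' (Subtype.coe_injective.ne haa') (a.2.trans a'.2.symm)).mono
        (support_closure_restrict_subset _ _) (support_closure_restrict_subset _ _)
  have hopen : IsOpen (⋃ b, (D b).support) :=
    isOpen_iUnion fun b => isOpen_support (hD b).isOpen_base
  refine ⟨D, hD, fun ν hν => measureReal_le_of_forall_mem_EG hopen.isClosed_compl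
    (fun μ hμ => ?_) hν⟩
  have := mem_MG_iff.1 hμ.1
  obtain ⟨a, ha⟩ := mem_iUnion.1 (hCE.symm ▸ hμ)
  have hsub : ((T a).restrict (A a)).support ⊆ ⋃ b, (D b).support := by
    refine subset_iUnion_of_subset (col a) ?_
    rw [support_sigma]
    exact subset_iUnion (fun a' : {a' // col a' = col a} => ((T a').restrict (A a')).support)
      ⟨a, rfl⟩
  rw [probReal_compl_eq_one_sub hopen.measurableSet]
  linarith [hTμ a μ ha, hAμ a μ ha, measureReal_mono (μ := (μ : Measure X)) hsub]

end Coloring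

end TowerFamily

/-! ### Absorbing the remainder -/

theorem exists_subset_card_le_div {α : Type*} {n : ℕ} (hn : 0 < n) {s : Finset α}
    (hs : n ≤ s.card) :
    ∃ t ⊆ s, (t.card : ℝ) ≤ s.card / n ∧ s.card ≤ 2 * n * t.card := by
  obtain ⟨t, hts, ht⟩ := Finset.exists_subset_card_eq (Nat.div_le_self s.card n)
  refine ⟨t, hts, ht ▸ Nat.cast_div_le, ?_⟩
  have hpos : n * 1 ≤ n * t.card := Nat.mul_le_mul_left n (ht ▸ Nat.div_pos hs hn)
  have hlt : s.card < n * (t.card + 1) := ht ▸ Nat.lt_mul_div_succ s.card hn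
  linarith

namespace TowerFamily

variable {G : Type u} {X : Type v} [Group G] [MetricSpace X] [MulAction G X] {m n : ℕ}

theorem measureReal_iUnion_support_le_withShape [MeasurableSpace X] [BorelSpace X]
    [ContinuousConstSMul G X] {κ : Type*} [Fintype κ] {K : Finset G} {δ : ℝ}
    {D : κ → TowerFamily G X} (hD : ∀ b, (D b).IsOpenCastle K δ n)
    {S : ∀ b, (D b).ι → Finset G} (hS : ∀ b i, S b i ⊆ (D b).shape i) {c : ℕ}
    (hc : ∀ b i, ((D b).shape i).card ≤ c * (S b i).card) (μ : Measure X) [IsFiniteMeasure μ]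
    [SMulInvariantMeasure G X μ] :
    μ.real (⋃ b, (D b).support) ≤
      (Fintype.card κ * c : ℕ) * μ.real (⋃ b, ((D b).withShape (S b)).support) :=
  calc μ.real (⋃ b, (D b).support) ≤ ∑ b, μ.real (D b).support := measureReal_iUnion_fintype_le _
    _ ≤ ∑ _b : κ, c * μ.real (⋃ b, ((D b).withShape (S b)).support) :=
        Finset.sum_le_sum fun b _ =>
          ((hD b).isCastle.measureReal_support_le_withShape
            (fun i => ((hD b).isOpen_base i).measurableSet) (hS b) (hc b) μ).trans <|
          mul_le_mul_of_nonneg_left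
            (measureReal_mono (subset_iUnion (fun b => ((D b).withShape (S b)).support) b))
            c.cast_nonneg
    _ = _ := by
        rw [Finset.sum_const, Finset.card_univ, nsmul_eq_mul, Nat.cast_mul, mul_assoc]

theorem mAlmostFinite_of_exists_isOpenCastle_family
    (h : ∀ n : ℕ, 1 ≤ n → ∀ (K : Finset G) (δ : ℝ), 0 < δ →
      ∃ (D : Fin (m + 1) → TowerFamily G X) (S : ∀ b, (D b).ι → Finset G),
        (∀ b, (D b).IsOpenCastle K δ n) ∧ (∀ b i, S b i ⊆ (D b).shape i) ∧
        (∀ b i, ((S b i).card : ℝ) ≤ ((D b).shape i).card / n) ∧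
        SubordinateM G X 0 (⋃ b, (D b).support)ᶜ (⋃ b, ((D b).withShape (S b)).support)) :
    MAlmostFinite G X m := by
  intro n hn K δ hδ
  obtain ⟨D, S, hD, hS, hcard, hsub⟩ := h n hn K δ hδ
  let e := (Fintype.equivFin (Σ b, (D b).ι)).symm
  have hcover (R : ∀ b, (D b).ι → Finset G) :
      ⋃ k, (R (e k).1 (e k).2 : Set G) • (D (e k).1).base (e k).2 =
        ⋃ b, ((D b).withShape (R b)).support :=
    (e.surjective.iUnion_comp fun a => (R a.1 a.2 : Set G) • (D a.1).base a.2).trans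
      (iUnion_sigma _)
  have hdisj : ∀ a a' : Σ b, (D b).ι, a ≠ a' → a.1 = a'.1 →
      Disjoint (((D a.1).shape a.2 : Set G) • closure ((D a.1).base a.2))
        (((D a'.1).shape a'.2 : Set G) • closure ((D a'.1).base a'.2)) := by
    rintro ⟨b, i⟩ ⟨_, j⟩ hne rfl
    exact (hD b).isCastle_closure.disjoint_smul_base fun hij => hne (congrArg _ hij)
  refine ⟨_, fun k => (D (e k).1).shape (e k).2, fun k => (D (e k).1).base (e k).2,
    fun k => (e k).1, fun k => S (e k).1 (e k).2, fun k => (hD _).isOpen_base _,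
    fun k => (hD _).isCastle_closure.isTower _, fun k => (hD _).folnerInv _,
    fun k => (hD _).diam_lt _, fun k l hkl => hdisj _ _ (e.injective.ne hkl),
    fun k => hS _ _, fun k => hcard _ _, ?_⟩
  rw [← compl_eq_univ_sdiff, hcover fun b => (D b).shape, hcover S]
  exact hsub

end TowerFamily

theorem real_lt_real_of_compl_le_of_le_mul {Y : Type*} [MeasurableSpace Y] {μ : Measure Y}
    [IsProbabilityMeasure μ] {A B : Set Y} (hA : MeasurableSet A) {q : ℝ} (hq : 1 ≤ q)
    (hcompl : μ.real Aᶜ ≤ 1 / (4 * q)) (hAB : μ.real A ≤ q * μ.real B) :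
    μ.real Aᶜ < μ.real B := by
  have hsum := probReal_compl_eq_one_sub (μ := μ) hA
  have hq4 : q * (1 / (4 * q)) = 1 / 4 := by field_simp
  have hqle : q * μ.real Aᶜ ≤ 1 / 4 := hq4 ▸ mul_le_mul_of_nonneg_left hcompl (by linarith)
  refine lt_of_mul_lt_mul_left ?_ (zero_le_one.trans hq)
  nlinarith [measureReal_nonneg (μ := μ) (s := Aᶜ)]

theorem mAlmostFinite_of_comparison_of_covDim_general {G X : Type*} [Group G] [Countable G]
    [Infinite G] [MetricSpace X] [CompactSpace X] [MeasurableSpace X] [BorelSpace X]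
    [MulAction G X] [ContinuousConstSMul G X] (hG : AmenableGroup G) (hfree : FreeAction G X)
    (m : ℕ) (hcpt : IsCompact (EG G X)) (hdim : CovDimLE (EG G X) m)
    (hcomp : HasMComparison G X 0) :
    MAlmostFinite G X m := by
  have := folnerFilter_neBot hG
  refine TowerFamily.mAlmostFinite_of_exists_isOpenCastle_family fun n hn K δ hδ => ?_
  let q : ℕ := Fintype.card (Fin (m + 1)) * (2 * n)
  have hq : (1 : ℝ) ≤ q :=
    Nat.one_le_cast.2 (Nat.mul_pos Fintype.card_pos (by lia))
  obtain ⟨D, hD, hDμ⟩ := TowerFamily.exists_isOpenCastle_family_measureReal_compl_le hfree hcpt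
    hdim K hδ n (ε := 1 / (4 * q)) (by positivity)
  choose S hS hSle hSge using fun b i => exists_subset_card_le_div hn ((hD b).le_card i)
  have hopen : IsOpen (⋃ b, (D b).support) :=
    isOpen_iUnion fun b => TowerFamily.isOpen_support (hD b).isOpen_base
  refine ⟨D, S, hD, hS, hSle, hcomp _ _ hopen.isClosed_compl
    (isOpen_iUnion fun b => TowerFamily.isOpen_support (hD b).isOpen_base) fun μ hμ => ?_⟩
  have := mem_MG_iff.1 hμ
  have hlt := real_lt_real_of_compl_le_of_le_mul hopen.measurableSet hq (hDμ μ hμ)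
    (TowerFamily.measureReal_iUnion_support_le_withShape hD hS hSge (μ : Measure X))
  exact mod_cast hlt

/-- If `E_G(X)` is compact of covering dimension at most `m` in the weak*
topology and the minimal free action has dynamical comparison, then it is `m`-almost finite. -/
theorem mAlmostFinite_of_comparison_of_covDim
    {G X : Type*} [Group G] [Countable G] [Infinite G]
    [MetricSpace X] [CompactSpace X] [Infinite X]
    [MeasurableSpace X] [BorelSpace X]
    [MulAction G X] [ContinuousConstSMul G X]
    (hG : AmenableGroup G)
    (hfree : FreeAction G X) (hmin : MinimalAction G X)
    (m : ℕ)
    (hcpt : IsCompact (EG G X)) (hdim : CovDimLE (EG G X) m)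
    (hcomp : HasMComparison G X 0) :
    MAlmostFinite G X m :=
  mAlmostFinite_of_comparison_of_covDim_general hG hfree m hcpt hdim hcomp
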